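/- For the weight vector w = (0,512,384,74,0,256,72,768,584,456,0,64,320,832,58,56,568,440,111,48,304,108,816,620,492,0,32,96,352,864) ∈ ℝ^30 (the weight vector associated to the string cone of the reduced expression s_1s_2s_1s_3s_4s_3s_2s_3s_1s_2 for Flag_5), the initial ideal init_w(I_5) is generated by binomials but is not a prime ideal. -/

import Mathlib

open MvPolynomial

/-- The weight of a monomial exponent `u` with respect to a weight vector `w`. -/
noncomputable def wt {N : ℕ} (w : Fin N → ℝ) (u : Fin N →₀ ℕ) : ℝ :=
  ∑ i, w i * (u i : ℝ)

open Classical in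
/-- The initial form of a polynomial `f` with respect to a weight vector `w`:
the sum of the terms whose weight is minimal among the terms of `f`. -/
noncomputable def initialForm {N : ℕ} (w : Fin N → ℝ) (f : MvPolynomial (Fin N) ℚ) :
    MvPolynomial (Fin N) ℚ :=
  ∑ u ∈ f.support, if ∀ v ∈ f.support, wt w u ≤ wt w v then monomial u (coeff u f) else 0

/-- The initial ideal of `I` with respect to a weight vector `w`. -/
noncomputable def initialIdeal {N : ℕ} (w : Fin N → ℝ) (I : Ideal (MvPolynomial (Fin N) ℚ)) :
    Ideal (MvPolynomial (Fin N) ℚ) :=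
  Ideal.span {g | ∃ f ∈ I, f ≠ 0 ∧ g = initialForm w f}

/-- An ideal is binomial if it is generated by polynomials with at most two terms. -/
def IsBinomialIdeal {N : ℕ} (I : Ideal (MvPolynomial (Fin N) ℚ)) : Prop :=
  ∃ S : Set (MvPolynomial (Fin N) ℚ), I = Ideal.span S ∧ ∀ f ∈ S, f.support.card ≤ 2

/-- The Plücker minor: the determinant of the submatrix of the `r × c` matrix of
indeterminates `(x_{i,j})` with row indices `1, …, |J|` and column indices the elements
of `J` in increasing order. -/
noncomputable def pluckerMinor (r c : ℕ) (J : Finset (Fin c)) (h : J.card ≤ r) :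
    MvPolynomial (Fin r × Fin c) ℚ :=
  (Matrix.of fun a b : Fin J.card =>
    MvPolynomial.X (Fin.castLE h a, ((J.orderIsoOfFin rfl b : Fin c)))).det

/-- The 30 nonempty proper subsets of `{1,2,3,4,5}` in the order
`p₁,…,p₅, p₁₂,p₁₃,p₁₄,p₁₅,p₂₃,p₂₄,p₂₅,p₃₄,p₃₅,p₄₅,
p₁₂₃,p₁₂₄,p₁₂₅,p₁₃₄,p₁₃₅,p₁₄₅,p₂₃₄,p₂₃₅,p₂₄₅,p₃₄₅,
p₁₂₃₄,p₁₂₃₅,p₁₂₄₅,p₁₃₄₅,p₂₃₄₅`. -/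
def subsets5 : Fin 30 → Finset (Fin 5) :=
  ![{0}, {1}, {2}, {3}, {4},
    {0, 1}, {0, 2}, {0, 3}, {0, 4}, {1, 2}, {1, 3}, {1, 4}, {2, 3}, {2, 4}, {3, 4},
    {0, 1, 2}, {0, 1, 3}, {0, 1, 4}, {0, 2, 3}, {0, 2, 4}, {0, 3, 4},
    {1, 2, 3}, {1, 2, 4}, {1, 3, 4}, {2, 3, 4},
    {0, 1, 2, 3}, {0, 1, 2, 4}, {0, 1, 3, 4}, {0, 2, 3, 4}, {1, 2, 3, 4}]

lemma subsets5_card : ∀ i : Fin 30, (subsets5 i).card ≤ 4 := by decide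

/-- The map `φ₅` sending each Plücker variable `p_J` to the corresponding minor of the
`4 × 5` matrix of indeterminates. -/
noncomputable def phi5 : MvPolynomial (Fin 30) ℚ →ₐ[ℚ] MvPolynomial (Fin 4 × Fin 5) ℚ :=
  MvPolynomial.aeval fun i => pluckerMinor 4 5 (subsets5 i) (subsets5_card i)

/-- The defining ideal `I₅` of the flag variety `Flag₅` in its Plücker embedding. -/
noncomputable def I5 : Ideal (MvPolynomial (Fin 30) ℚ) := RingHom.ker phi5.toRingHom



/-! ## Computable sparse polynomials -/

abbrev LPoly := List (ℤ × List ℕ)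

def mev {A : Type*} [CommRing A] (v : ℕ → A) (m : List ℕ) : A := (m.map v).prod

def pev {A : Type*} [CommRing A] (v : ℕ → A) (p : LPoly) : A :=
  (p.map fun t => (t.1 : A) * mev v t.2).sum

def insN (a : ℕ) : List ℕ → List ℕ
  | [] => [a]
  | b :: t => bif Nat.ble a b then a :: b :: t else b :: insN a t

def mulM (m n : List ℕ) : List ℕ := m.foldr insN n

def cmpL : List ℕ → List ℕ → Ordering
  | [], [] => .eq
  | [], _ :: _ => .lt
  | _ :: _, [] => .gt
  | a :: s, b :: t => bif Nat.beq a b then cmpL s t else bif Nat.ble a b then .lt else .gt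

def mergeP : ℕ → LPoly → LPoly → LPoly
  | 0, p, q => p ++ q
  | _ + 1, [], q => q
  | _ + 1, p :: ps, [] => p :: ps
  | n + 1, (c, m) :: p, (d, k) :: q =>
    match cmpL m k with
    | .eq => bif decide (c + d = 0) then mergeP n p q else (c + d, m) :: mergeP n p q
    | .gt => (c, m) :: mergeP n p ((d, k) :: q)
    | .lt => (d, k) :: mergeP n ((c, m) :: p) q

def scl (c : ℤ) (m : List ℕ) (p : LPoly) : LPoly := p.map fun t => (c * t.1, mulM m t.2)

def mulP (p q : LPoly) : LPoly := p.foldr (fun t acc => mergeP 3000 (scl t.1 t.2 q) acc) []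

def remL : List ℕ → List ℕ → Option (List ℕ)
  | [], m => some m
  | _ :: _, [] => none
  | a :: l, b :: m =>
    bif Nat.beq a b then remL l m else
      match remL (a :: l) m with
      | none => none
      | some r => some (b :: r)

def findQ (m : List ℕ) : List LPoly → Option (List ℕ × LPoly)
  | [] => none
  | [] :: Q => findQ m Q
  | ((c, l) :: t) :: Q =>
    match remL l m with
    | none => findQ m Q
    | some r => bif decide (c = 1) then some (r, t) else none

def redP (Q : List LPoly) : ℕ → LPoly → Bool
  | _, [] => true
  | 0, _ :: _ => false
  | n + 1, (c, m) :: p =>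
    match findQ m Q with
    | none => false
    | some (r, t) => redP Q n (mergeP 3000 (scl (-c) r t) p)

def sortP (p : LPoly) : LPoly := p.foldr (fun t acc => mergeP 100 [t] acc) []

section engine
variable {A : Type*} [CommRing A] (v : ℕ → A)

@[simp] lemma mev_nil : mev v [] = 1 := by simp [mev]
@[simp] lemma mev_cons (a : ℕ) (m : List ℕ) : mev v (a :: m) = v a * mev v m := by simp [mev]
@[simp] lemma pev_nil : pev v [] = 0 := by simp [pev]
@[simp] lemma pev_cons (t : ℤ × List ℕ) (p : LPoly) :
    pev v (t :: p) = (t.1 : A) * mev v t.2 + pev v p := by simp [pev]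
@[simp] lemma pev_append (p q : LPoly) : pev v (p ++ q) = pev v p + pev v q := by simp [pev]

lemma mev_insN (a : ℕ) (m : List ℕ) : mev v (insN a m) = v a * mev v m := by
  induction m with
  | nil => simp [insN]
  | cons b t ih =>
    rw [insN]
    cases Nat.ble a b
    · simp [ih]; ring
    · simp

lemma mev_mulM (m n : List ℕ) : mev v (mulM m n) = mev v m * mev v n := by
  induction m with
  | nil => simp [mulM]
  | cons b t ih =>
    have : mulM (b :: t) n = insN b (mulM t n) := rfl
    rw [this, mev_insN, ih, mev_cons]; ring

lemma cmpL_eq (a b : List ℕ) (h : cmpL a b = .eq) : a = b := by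
  induction a generalizing b with
  | nil => cases b <;> simp_all [cmpL]
  | cons x s ih =>
    cases b with
    | nil => simp [cmpL] at h
    | cons y t =>
      rw [cmpL] at h
      cases hb : Nat.beq x y
      · rw [hb] at h
        cases hc : Nat.ble x y <;> simp [hc] at h
      · rw [hb] at h
        rw [Nat.eq_of_beq_eq_true hb, ih t (by simpa using h)]

lemma pev_mergeP (n : ℕ) (p q : LPoly) : pev v (mergeP n p q) = pev v p + pev v q := by
  induction n generalizing p q with
  | zero => simp [mergeP]
  | succ n ih =>
    match p, q with
    | [], q => simp [mergeP]
    | p :: ps, [] => simp [mergeP]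
    | (c, m) :: p, (d, k) :: q =>
      rw [mergeP]
      split
      · next h =>
        have := cmpL_eq _ _ h
        subst this
        by_cases hc : c + d = 0
        · have hA : (c : A) + d = 0 := by exact_mod_cast congrArg (Int.cast (R := A)) hc
          simp only [hc, decide_true, cond_true, ih, pev_cons]
          linear_combination (-mev v m) * hA
        · simp only [hc, decide_false, cond_false, ih, pev_cons]
          push_cast; ring
      · simp only [pev_cons, ih]; ring
      · simp only [pev_cons, ih]; ring

lemma pev_scl (c : ℤ) (m : List ℕ) (p : LPoly) :
    pev v (scl c m p) = c * mev v m * pev v p := by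
  induction p with
  | nil => simp [scl]
  | cons t p ih =>
    have : scl c m (t :: p) = (c * t.1, mulM m t.2) :: scl c m p := rfl
    rw [this, pev_cons, ih, pev_cons, mev_mulM]; push_cast; ring

lemma pev_mulP (p q : LPoly) : pev v (mulP p q) = pev v p * pev v q := by
  induction p with
  | nil => simp [mulP]
  | cons t p ih =>
    have : mulP (t :: p) q = mergeP 3000 (scl t.1 t.2 q) (mulP p q) := rfl
    rw [this, pev_mergeP, pev_scl, ih, pev_cons]; ring

lemma mev_remL (l m r : List ℕ) (h : remL l m = some r) : mev v m = mev v l * mev v r := by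
  induction m generalizing l r with
  | nil => cases l <;> simp_all [remL]
  | cons b m ih =>
    cases l with
    | nil => simp [remL] at h; subst h; simp
    | cons a l =>
      rw [remL] at h
      cases hb : Nat.beq a b
      · rw [hb] at h
        simp only [cond_false] at h
        split at h
        · simp at h
        · next r' hr' =>
          simp only [Option.some.injEq] at h
          subst h
          rw [mev_cons, ih _ _ hr', mev_cons, mev_cons]; ring
      · rw [hb] at h
        have := Nat.eq_of_beq_eq_true hb
        subst this
        rw [mev_cons, ih _ _ (by simpa using h), mev_cons]; ring

lemma findQ_sound (Q : List LPoly) (hQ : ∀ q ∈ Q, pev v q = 0) (m r : List ℕ) (t : LPoly)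
    (h : findQ m Q = some (r, t)) : mev v m = - (mev v r * pev v t) := by
  induction Q with
  | nil => simp [findQ] at h
  | cons q Q ih =>
    have hQ' : ∀ q ∈ Q, pev v q = 0 := fun q hq => hQ q (by simp [hq])
    match q with
    | [] => exact ih hQ' (by simpa [findQ] using h)
    | (c, l) :: t' =>
      rw [findQ] at h
      split at h
      · exact ih hQ' h
      · next r' hr' =>
        by_cases hc : c = 1
        · simp only [hc, decide_true, cond_true, Option.some.injEq, Prod.mk.injEq] at h
          obtain ⟨h1, h2⟩ := h
          subst h1 h2
          have := hQ ((c, l) :: t') (by simp)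
          rw [pev_cons] at this
          simp only [hc, Int.cast_one, one_mul] at this
          rw [mev_remL v _ _ _ hr']
          linear_combination mev v r' * this
        · simp [hc] at h

lemma redP_sound (Q : List LPoly) (hQ : ∀ q ∈ Q, pev v q = 0) (n : ℕ) (p : LPoly)
    (h : redP Q n p = true) : pev v p = 0 := by
  induction n generalizing p with
  | zero => cases p <;> simp_all [redP]
  | succ n ih =>
    match p with
    | [] => simp
    | (c, m) :: p =>
      rw [redP] at h
      split at h
      · simp at h
      · next r t hf =>
        have h1 := ih _ h
        rw [pev_mergeP, pev_scl] at h1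
        rw [pev_cons, findQ_sound v Q hQ m r t hf]
        push_cast at h1
        linear_combination h1

lemma pev_sortP (p : LPoly) : pev v (sortP p) = pev v p := by
  induction p with
  | nil => simp [sortP]
  | cons t p ih =>
    have : sortP (t :: p) = mergeP 100 [t] (sortP p) := rfl
    rw [this, pev_mergeP, ih]; simp

end engine


def minL : List ℕ → LPoly
  | [a] => [(1, [a])]
  | [a, b] => [(-1, [b, 5 + a]), (1, [a, 5 + b])]
  | [a, b, c] => [(-1, [c, 5 + b, 10 + a]), (1, [c, 5 + a, 10 + b]), (1, [b, 5 + c, 10 + a]), (-1, [b, 5 + a, 10 + c]), (-1, [a, 5 + c, 10 + b]), (1, [a, 5 + b, 10 + c])]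
  | [a, b, c, d] => [(1, [d, 5 + c, 10 + b, 15 + a]), (-1, [d, 5 + c, 10 + a, 15 + b]), (-1, [d, 5 + b, 10 + c, 15 + a]), (1, [d, 5 + b, 10 + a, 15 + c]), (1, [d, 5 + a, 10 + c, 15 + b]), (-1, [d, 5 + a, 10 + b, 15 + c]), (-1, [c, 5 + d, 10 + b, 15 + a]), (1, [c, 5 + d, 10 + a, 15 + b]), (1, [c, 5 + b, 10 + d, 15 + a]), (-1, [c, 5 + b, 10 + a, 15 + d]), (-1, [c, 5 + a, 10 + d, 15 + b]), (1, [c, 5 + a, 10 + b, 15 + d]), (1, [b, 5 + d, 10 + c, 15 + a]), (-1, [b, 5 + d, 10 + a, 15 + c]), (-1, [b, 5 + c, 10 + d, 15 + a]), (1, [b, 5 + c, 10 + a, 15 + d]), (1, [b, 5 + a, 10 + d, 15 + c]), (-1, [b, 5 + a, 10 + c, 15 + d]), (-1, [a, 5 + d, 10 + c, 15 + b]), (1, [a, 5 + d, 10 + b, 15 + c]), (1, [a, 5 + c, 10 + d, 15 + b]), (-1, [a, 5 + c, 10 + b, 15 + d]), (-1, [a, 5 + b, 10 + d, 15 + c]),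 (1, [a, 5 + b, 10 + c, 15 + d])]
  | _ => [(1, [])]

def tabQ : List LPoly := [
[(1,[4,12]),(-1,[3,13]),(1,[2,14])],
[(1,[4,10]),(-1,[3,11]),(1,[1,14])],
[(1,[4,9]),(-1,[2,11]),(1,[1,13])],
[(1,[3,9]),(-1,[2,10]),(1,[1,12])],
[(1,[4,7]),(-1,[3,8]),(1,[0,14])],
[(1,[4,6]),(-1,[2,8]),(1,[0,13])],
[(1,[3,6]),(-1,[2,7]),(1,[0,12])],
[(1,[4,5]),(-1,[1,8]),(1,[0,11])],
[(1,[3,5]),(-1,[1,7]),(1,[0,10])],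
[(1,[2,5]),(-1,[1,6]),(1,[0,9])],
[(1,[4,21]),(-1,[3,22]),(1,[2,23]),(-1,[1,24])],
[(1,[4,18]),(-1,[3,19]),(1,[2,20]),(-1,[0,24])],
[(1,[4,16]),(-1,[3,17]),(1,[1,20]),(-1,[0,23])],
[(1,[4,15]),(-1,[2,17]),(1,[1,19]),(-1,[0,22])],
[(1,[3,15]),(-1,[2,16]),(1,[1,18]),(-1,[0,21])],
[(1,[4,25]),(-1,[3,26]),(1,[2,27]),(-1,[1,28]),(1,[0,29])],
[(1,[11,12]),(-1,[10,13]),(1,[9,14])],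
[(1,[8,12]),(-1,[7,13]),(1,[6,14])],
[(1,[8,10]),(-1,[7,11]),(1,[5,14])],
[(1,[8,9]),(-1,[6,11]),(1,[5,13])],
[(1,[7,9]),(-1,[6,10]),(1,[5,12])],
[(1,[14,22]),(-1,[13,23]),(1,[11,24])],
[(1,[14,21]),(-1,[12,23]),(1,[10,24])],
[(1,[13,21]),(-1,[12,22]),(1,[9,24])],
[(1,[11,21]),(-1,[10,22]),(1,[9,23])],
[(1,[14,19]),(-1,[13,20]),(1,[8,24])],
[(1,[14,18]),(-1,[12,20]),(1,[7,24])],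
[(1,[13,18]),(-1,[12,19]),(1,[6,24])],
[(1,[14,17]),(-1,[11,20]),(1,[8,23])],
[(1,[14,16]),(-1,[10,20]),(1,[7,23])],
[(1,[13,17]),(-1,[11,19]),(1,[8,22])],
[(1,[14,15]),(-1,[9,20]),(1,[6,23]),(-1,[5,24])],
[(1,[13,16]),(-1,[10,19]),(1,[7,22]),(1,[5,24])],
[(1,[12,17]),(-1,[10,19]),(1,[9,20]),(1,[7,22]),(-1,[6,23]),(1,[5,24])],
[(1,[11,18]),(-1,[10,19]),(1,[9,20]),(1,[5,24])],
[(1,[8,21]),(-1,[7,22]),(1,[6,23]),(-1,[5,24])],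
[(1,[12,16]),(-1,[10,18]),(1,[7,21])],
[(1,[13,15]),(-1,[9,19]),(1,[6,22])],
[(1,[12,15]),(-1,[9,18]),(1,[6,21])],
[(1,[11,16]),(-1,[10,17]),(1,[5,23])],
[(1,[11,15]),(-1,[9,17]),(1,[5,22])],
[(1,[10,15]),(-1,[9,16]),(1,[5,21])],
[(1,[8,18]),(-1,[7,19]),(1,[6,20])],
[(1,[8,16]),(-1,[7,17]),(1,[5,20])],
[(1,[8,15]),(-1,[6,17]),(1,[5,19])],
[(1,[7,15]),(-1,[6,16]),(1,[5,18])],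
[(1,[14,26]),(-1,[13,27]),(1,[11,28]),(-1,[8,29])],
[(1,[14,25]),(-1,[12,27]),(1,[10,28]),(-1,[7,29])],
[(1,[13,25]),(-1,[12,26]),(1,[9,28]),(-1,[6,29])],
[(1,[11,25]),(-1,[10,26]),(1,[9,27]),(-1,[5,29])],
[(1,[8,25]),(-1,[7,26]),(1,[6,27]),(-1,[5,28])],
[(1,[20,22]),(-1,[19,23]),(1,[17,24])],
[(1,[20,21]),(-1,[18,23]),(1,[16,24])],
[(1,[19,21]),(-1,[18,22]),(1,[15,24])],
[(1,[17,21]),(-1,[16,22]),(1,[15,23])],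
[(1,[17,18]),(-1,[16,19]),(1,[15,20])],
[(1,[24,27]),(-1,[23,28]),(1,[20,29])],
[(1,[24,26]),(-1,[22,28]),(1,[19,29])],
[(1,[24,25]),(-1,[21,28]),(1,[18,29])],
[(1,[23,26]),(-1,[22,27]),(1,[17,29])],
[(1,[23,25]),(-1,[21,27]),(1,[16,29])],
[(1,[22,25]),(-1,[21,26]),(1,[15,29])],
[(1,[20,26]),(-1,[19,27]),(1,[17,28])],
[(1,[20,25]),(-1,[18,27]),(1,[16,28])],
[(1,[19,25]),(-1,[18,26]),(1,[15,28])],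
[(1,[17,25]),(-1,[16,26]),(1,[15,27])]]


/-- Decoding of a monomial from its base 32 digits. -/
def decM : ℕ → ℕ → List ℕ
  | 0, _ => []
  | k + 1, n => bif Nat.beq n 0 then [] else (n % 32 - 1) :: decM k (n / 32)

/-- Decoding of a term: the lowest base 8 digit is the coefficient plus 3. -/
def decT (n : ℕ) : ℤ × List ℕ := (Int.subNatNat (n % 8) 3, decM 10 (n / 8))

def codeG : List (List ℕ) := [
  [3372, 3868, 3618],
  [2860, 3106, 3860],
  [3100, 2602, 3602],
  [2844, 2594, 3346],
  [3852, 2338, 2092],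
  [1836, 3596, 2330],
  [1828, 3340, 2074],
  [3084, 1580, 2322],
  [2828, 1572, 2066],
  [2572, 1810, 1564],
  [5676, 5922, 6172, 6418],
  [4908, 5154, 6410, 5404],
  [4644, 4394, 6156, 5394],
  [4140, 5140, 5898, 4634],
  [5644, 4130, 4882, 4380],
  [6700, 6946, 7196, 7442, 7692],
  [3428, 3924, 3674],
  [3900, 3404, 3650],
  [3892, 2892, 3138],
  [3132, 2634, 3634],
  [2876, 3378, 2626],
  [6500, 6012, 6258],
  [5756, 6492, 6250],
  [5748, 6484, 5994],
  [5732, 5978, 6228],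
  [5244, 6476, 5490],
  [4988, 5482, 6468],
  [5228, 6458, 4978],
  [5476, 4730, 6218],
  [5468, 4474, 6210],
  [5220, 4722, 5962],
  [5212, 6450, 4466, 5954],
  [4220, 6450, 4716, 4466],
  [4964, 5460, 4466, 5954],
  [6204, 4714, 5458, 4468],
  [5708, 6450, 4716, 5460, 4466, 5954],
  [4956, 5698, 4458],
  [5204, 4210, 5946],
  [5692, 4204, 4946],
  [4700, 4450, 6194],
  [4196, 4690, 5940],
  [4188, 5684, 4434],
  [5436, 4940, 5186],
  [5428, 4428, 4674],
  [5172, 4666, 4172],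
  [4916, 4410, 4164],
  [7036, 7524, 7282, 7754],
  [6780, 7516, 7274, 7746],
  [7020, 7506, 6770, 7740],
  [7004, 6754, 7250, 7732],
  [7228, 6732, 7474, 6978],
  [6308, 6546, 6058],
  [5804, 6298, 6540],
  [5796, 6532, 6042],
  [5780, 6276, 6026],
  [5508, 5012, 5258],
  [7372, 7618, 7852],
  [7116, 7844, 7610],
  [7604, 6858, 7834],
  [7108, 7354, 7828],
  [7348, 6850, 7818],
  [7092, 6842, 7810],
  [7332, 7082, 7570],
  [7324, 6826, 7562],
  [6820, 7066, 7556],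
  [7300, 6804, 7050],
  [219540, 243844, 250772, 243594],
  [217660, 217162, 241716, 225594, 225348],
  [134692, 206612, 206362, 191754, 159252, 142874],
  [165652, 134666, 190218, 149274, 133404],
  [167972, 208908, 168724, 193290, 168218],
  [174628, 143130, 175380, 198682],
  [133668, 181788, 134420, 141850],
  [241700, 219402, 242452, 250634, 241946],
  [225316, 226068, 218890, 249866, 225562],
  [207404, 192284, 200218, 208404],
  [206380, 200204, 190754, 190508, 207122],
  [208724, 192362, 208474, 200300],
  [207436, 208436, 151146, 175698, 191818, 142964, 192068],
  [166180, 165930, 207116, 175626],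
  [210260, 193898, 201588, 209266],
  [175372, 157986, 165924, 174106],
  [174636, 151322, 198938, 175636],
  [151404, 175956, 143218, 200012, 200258],
  [209532, 193916, 211020, 202098],
  [209492, 200818, 193130, 192884],
  [133412, 206346, 150796, 165908, 142858, 190474, 149530],
  [206644, 150842, 134476, 142908, 134722],
  [176748, 177492, 201548, 209474, 176498, 193858],
  [158244, 158996, 182298, 142618],
  [207420, 134762, 191802, 159316],
  [209460, 152170, 176722, 200780, 151924, 192842, 193092],
  [150076, 133706, 134706, 190258],
  [160316, 168250, 159818, 168004],
  [239148, 223522, 223276, 232972, 239890, 248076],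
  [216140, 240690, 224322, 232012, 233012],
  [232716, 215330, 239140, 223268, 231450],
  [215884, 240434, 232756, 216130, 247860],
  [234092, 234836, 219212, 243762, 233842, 235330, 250436],
  [217700, 225634, 234068, 235314],
  [235388, 243812, 250490, 235634, 251978],
  [219468, 244018, 242284, 243028, 250700, 242034, 243522],
  [244052, 219508, 243562, 250740],
  [235372, 243794, 219250, 251220, 250226],
  [219452, 241772, 242514, 250684],
  [219564, 243866, 251292, 244108],
  [226644, 242260, 217716, 218956, 243506, 225650, 227138],
  [219236, 235354, 235604, 250212],
  [226132, 241746, 217202, 218938],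
  [7753044, 7776852, 6966892, 6991444, 7007564, 7793970, 8022604, 7745106, 6958706, 8007228, 7793218, 7007810, 7999042],
  [7533908, 7803476, 7017076, 7018316, 7804722, 8041042, 7532914, 7534402, 8016244, 8057412],
  [6967916, 6992468, 7016522, 7802932, 6967666, 8016188, 7008588, 7794994, 7008834, 8015938],
  [7752244, 6966836, 7219786, 7006516, 7792178, 7220786, 7227972, 7268402],
  [7015948, 7006498, 7792164, 7800346, 7752980, 7776788, 7268388, 7530522, 8022292, 8030226, 7745042, 8007180, 8005914, 8013852],
  [6450700, 6187298, 6711570, 6195236, 6719508, 6696458, 6695196, 6703130, 6203418],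
  [6426124, 6702866, 6180108, 4869404, 5655068, 6424858, 6172170, 4861466, 6170908, 6178842],
  [7235348, 6950410, 7005962, 7735058, 7734812, 7218970, 7211036],
  [7235860, 6966794, 7243794, 7751442, 7006474, 7792140, 7220748, 7751196, 7219482, 7268364, 7227420],
  [7024140, 7808788, 7808538, 7793930, 8023564],
  [6669836, 4836618, 6629140, 6628890, 6138122, 5097748, 5359634, 4574732, 4573466, 6146060, 4835356],
  [5400852, 5408786, 5131786, 5385740, 6187274, 5384474, 6195212, 5392412],
  [7235876, 7243810, 6991370, 7251996, 7760148, 8022282, 7768082, 8030220, 7743770, 7751708],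
  [7252260, 7252010, 7515658, 7743788, 7751722, 7776532, 8038666],
  [7802964, 7016564, 7008876, 8024660, 7795026, 7008626],
  [5132908, 5665364, 6451274, 6705466, 6705220, 5132658, 6189388, 6189634],
  [6612756, 4312330, 6137610, 4826906, 4303132, 5097236],
  [4869460, 5655124, 6425162, 6426162, 6180146, 4861522, 6171212, 6172212, 6179394],
  [7735860, 7219770, 6950452, 7006004, 7211588],
  [4777748, 4310538, 6088202, 4777498, 4269842, 4269596],
  [6695212, 6703146, 6467082, 6203684, 6203434, 6727956],
  [7448092, 6900004, 7685666, 7161890, 6924564, 7710226, 7424028, 7686162, 6932498, 7931668],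
  [7752756, 7220298, 7228484, 7491122, 7530802],
  [7801908, 7531338, 7531588, 7540274, 8006732, 8014914],
  [7293220, 7824930, 7301154, 7556618, 7833116, 7563292, 7817492, 8079626, 7841298, 8103436, 7825426, 8087564],
  [7009644, 7803730, 7017330, 8041300, 7795052, 8024434],
  [7736660, 6950508, 7007548, 7760466, 6975058, 8022588],
  [6696748, 6205220, 6729492, 6467106, 6752300],
  [6696732, 6204706, 6728978, 6450724, 6696482, 6752284],
  [5384492, 5392426, 5671188, 5656074, 6203658],
  [232139052, 232146986, 240537098, 232171796, 241084682, 248129836, 248137770, 248924436],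
  [224310612, 249721428, 224555636, 224588620, 257323602, 249450858, 224309618, 249753668, 224326978, 256790900, 257847876, 249491778],
  [241847820, 233482514, 241887500, 250799626, 242101770, 250758682, 233744404, 242100508, 242149386, 242108442, 250235154, 251020820, 250489106, 250497045],
  [222940428, 248096532, 224241932, 249406986, 248096282, 248334610, 223201554, 256714516, 222678538, 231589908, 247842578, 256231180, 247810332, 222677276, 247842332, 248072218, 224249866, 222939162, 256190234, 255969290, 249366044, 255928348],
  [222938636, 248047124, 224208396, 249349642, 231065098, 248038938, 231024402, 231024156, 231278356, 232588810, 231278106],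
  [222416140, 224241420, 247572244, 247571994, 248334098, 223201042, 256698132, 247809820, 222676764, 256173850, 247547930, 222414874, 255919900],
  [222414348, 224192012, 247522836, 231008018, 247514650, 231007772, 230754068, 230753818],
  [241348108, 241084706, 241084460, 249702698, 249710636, 257304876, 249735442, 257312810, 257337620],
  [198602020, 215379220, 206466594, 215362842, 214838820, 216164378, 216410140],
  [224816676, 249457954, 249982226, 256798244, 249965852, 224864284, 258369564],
  [164220172, 214771474, 198027532, 214288138, 214247196, 214026252, 164481298, 172869652, 213985306, 163958282, 163957020, 198035466, 164218906],
  [224217380, 249382434, 249644572, 224511516, 232605730, 224241940, 249406994, 240994332, 256198940, 249382930, 256230940, 256460826, 224249874, 257754900]]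

def tabG : List LPoly := codeG.map fun g => g.map decT


def colsT : List (List ℕ) := [[0], [1], [2], [3], [4],
  [0, 1], [0, 2], [0, 3], [0, 4], [1, 2], [1, 3], [1, 4], [2, 3], [2, 4], [3, 4],
  [0, 1, 2], [0, 1, 3], [0, 1, 4], [0, 2, 3], [0, 2, 4], [0, 3, 4],
  [1, 2, 3], [1, 2, 4], [1, 3, 4], [2, 3, 4],
  [0, 1, 2, 3], [0, 1, 2, 4], [0, 1, 3, 4], [0, 2, 3, 4], [1, 2, 3, 4]]

def minT (i : ℕ) : LPoly := minL (colsT.getD i [])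

def xmon (m : List ℕ) : LPoly := m.foldr (fun i acc => mulP (minT i) acc) [(1, [])]

def xev (p : LPoly) : LPoly := p.foldr (fun t acc => mergeP 3000 (scl t.1 [] (xmon t.2)) acc) []

set_option maxRecDepth 100000 in
lemma checkQ : (tabQ.all fun q => (xev q).isEmpty) = true := by decide +kernel

set_option maxRecDepth 100000 in
lemma checkG : (tabG.all fun g => redP tabQ 100 (sortP g)) = true := by decide +kernel


def subsL : List ℕ → List ℕ → Bool
  | [], _ => true
  | _ :: _, [] => false
  | a :: l, b :: m => bif Nat.beq a b then subsL l m else subsL (a :: l) m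

def hasN (x : ℕ) : List ℕ → Bool
  | [] => false
  | a :: l => bif Nat.beq a x then true else hasN x l

def delN (x : ℕ) : List ℕ → List ℕ
  | [] => []
  | a :: l => bif Nat.beq a x then l else a :: delN x l

def newL (x : ℕ) (L : List (List ℕ)) : List (List ℕ) := (L.filter (hasN x)).map (delN x)

def oldL (x : ℕ) (L : List (List ℕ)) : List (List ℕ) := L.filter fun l => !hasN x l

def quoL (x : ℕ) (L : List (List ℕ)) : List (List ℕ) :=
  newL x L ++ (oldL x L).filter fun m => !((newL x L).any fun l => subsL l m)

def addK : List ℤ → List ℤ → List ℤ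
  | [], b => b
  | a :: as, [] => a :: as
  | a :: as, b :: bs => (a + b) :: addK as bs

def subK : List ℤ → List ℤ → List ℤ
  | [], b => b.map Neg.neg
  | a :: as, [] => a :: as
  | a :: as, b :: bs => (a - b) :: subK as bs

def kpoly : ℕ → List (List ℕ) → Option (List ℤ)
  | _, [] => some [1]
  | 0, _ :: _ => none
  | _ + 1, [] :: _ => some []
  | n + 1, (x :: l) :: L =>
    bif Nat.blt x 30 then
      match kpoly n (quoL x ((x :: l) :: L)), kpoly n (oldL x ((x :: l) :: L)) with
      | some a, some b => some (addK (0 :: a) (subK b (0 :: b)))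
      | _, _ => none
    else none

def leadsOf (G : List LPoly) : List (List ℕ) := G.map fun g => (g.headD (0, [])).2.reverse

def sameK : Option (List ℤ) → Option (List ℤ) → Bool
  | some a, some b => (subK a b).all fun z => decide (z = 0)
  | _, _ => false

set_option maxRecDepth 100000 in
lemma checkK : sameK (kpoly 1000 (leadsOf tabG)) (kpoly 1000 (leadsOf tabQ)) = true := by
  decide +kernel


/-! ## Link with the Plücker map -/

abbrev TX := MvPolynomial (Fin 4 × Fin 5) ℚ
abbrev PX := MvPolynomial (Fin 30) ℚ

noncomputable def vx (k : ℕ) : TX := X (Fin.ofNat 4 (k / 5), Fin.ofNat 5 (k % 5))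

noncomputable def v30 (i : ℕ) : TX := if h : i < 30 then phi5 (X ⟨i, h⟩) else 1

noncomputable def vX (i : ℕ) : PX := if h : i < 30 then X ⟨i, h⟩ else 1

lemma minor_eq (k : ℕ) (hk : k ≤ 4) (J : Finset (Fin 5)) (hJ : J.card = k) (h : J.card ≤ 4)
    (f : Fin k → Fin 5) (hf : StrictMono f) (hm : ∀ a, f a ∈ J) :
    pluckerMinor 4 5 J h =
      (Matrix.of fun a b : Fin k => (X (Fin.castLE hk a, f b) : TX)).det := by
  subst hJ
  have := Finset.orderEmbOfFin_unique rfl hm hf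
  unfold pluckerMinor
  congr 1
  ext1 a b
  simp only [Matrix.of_apply]
  rw [this]
  rfl

lemma vx0 (a : ℕ) (ha : a < 5) : vx a = X (0, ⟨a, ha⟩) := by
  unfold vx
  congr 2
  · ext; simp; omega
  · ext; simp; omega
lemma vx1 (a : ℕ) (ha : a < 5) : vx (5 + a) = X (1, ⟨a, ha⟩) := by
  unfold vx
  congr 2
  · ext; simp; omega
  · ext; simp; omega
lemma vx2 (a : ℕ) (ha : a < 5) : vx (10 + a) = X (2, ⟨a, ha⟩) := by
  unfold vx
  congr 2
  · ext; simp; omega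
  · ext; simp; omega
lemma vx3 (a : ℕ) (ha : a < 5) : vx (15 + a) = X (3, ⟨a, ha⟩) := by
  unfold vx
  congr 2
  · ext; simp; omega
  · ext; simp; omega

lemma minor1 (J : Finset (Fin 5)) (h : J.card ≤ 4) (a : ℕ) (ha : a < 5)
    (hJ : J = {⟨a, ha⟩}) : pluckerMinor 4 5 J h = pev vx (minL [a]) := by
  subst hJ
  rw [minor_eq 1 (by omega) _ (by simp) h ![⟨a, ha⟩] (by intro i j; omega) (by simp)]
  simp [minL, vx0 a ha]

lemma minor2 (J : Finset (Fin 5)) (h : J.card ≤ 4) (a b : ℕ) (hab : a < b) (ha : a < 5)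
    (hb : b < 5) (hJ : J = {⟨a, ha⟩, ⟨b, hb⟩}) : pluckerMinor 4 5 J h = pev vx (minL [a, b]) := by
  subst hJ
  rw [minor_eq 2 (by omega) _ (by rw [Finset.card_pair]; simp; omega) h
    ![⟨a, by omega⟩, ⟨b, hb⟩] (by rw [Fin.strictMono_iff_lt_succ]; simp [hab])
    (by simp [Fin.forall_fin_succ])]
  simp [minL, vx0 a (by omega), vx0 b hb, vx1 a (by omega), vx1 b hb, Matrix.det_fin_two]
  ring

lemma minor3 (J : Finset (Fin 5)) (h : J.card ≤ 4) (a b c : ℕ) (hab : a < b) (hbc : b < c)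
    (ha : a < 5) (hb : b < 5) (hc : c < 5) (hJ : J = {⟨a, ha⟩, ⟨b, hb⟩, ⟨c, hc⟩}) :
    pluckerMinor 4 5 J h = pev vx (minL [a, b, c]) := by
  subst hJ
  rw [minor_eq 3 (by omega) _ (by rw [Finset.card_insert_of_notMem, Finset.card_pair] <;> simp <;> omega) h
    ![⟨a, by omega⟩, ⟨b, by omega⟩, ⟨c, hc⟩]
    (by rw [Fin.strictMono_iff_lt_succ]; simp [Fin.forall_fin_succ, hab, hbc])
    (by simp [Fin.forall_fin_succ])]
  simp [minL, vx0 a (by omega), vx0 b (by omega), vx0 c hc, vx1 a (by omega), vx1 b (by omega),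
    vx1 c hc, vx2 a (by omega), vx2 b (by omega), vx2 c hc, Matrix.det_fin_three]
  ring

lemma minor4 (J : Finset (Fin 5)) (h : J.card ≤ 4) (a b c d : ℕ) (hab : a < b) (hbc : b < c)
    (hcd : c < d) (ha : a < 5) (hb : b < 5) (hc : c < 5) (hd : d < 5)
    (hJ : J = {⟨a, ha⟩, ⟨b, hb⟩, ⟨c, hc⟩, ⟨d, hd⟩}) :
    pluckerMinor 4 5 J h = pev vx (minL [a, b, c, d]) := by
  subst hJ
  rw [minor_eq 4 (by omega) _ (by
      rw [Finset.card_insert_of_notMem, Finset.card_insert_of_notMem, Finset.card_pair] <;>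
        simp <;> omega) h
    ![⟨a, by omega⟩, ⟨b, by omega⟩, ⟨c, by omega⟩, ⟨d, hd⟩]
    (by rw [Fin.strictMono_iff_lt_succ]; simp [Fin.forall_fin_succ, hab, hbc, hcd])
    (by simp [Fin.forall_fin_succ])]
  simp [minL, vx0 a (by omega), vx0 b (by omega), vx0 c (by omega), vx1 a (by omega),
    vx1 b (by omega), vx1 c (by omega), vx2 a (by omega), vx2 b (by omega), vx2 c (by omega),
    vx3 a (by omega), vx3 b (by omega), vx3 c (by omega), vx0 d hd, vx1 d hd, vx2 d hd, vx3 d hd,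
    Matrix.det_succ_row_zero, Fin.sum_univ_succ, Fin.succAbove]
  ring

lemma v30_eq (i : ℕ) : v30 i = pev vx (minT i) := by
  by_cases h : i < 30
  · rw [v30, dif_pos h, phi5, aeval_X]
    interval_cases i
    · exact minor1 _ _ 0 (by decide) rfl
    · exact minor1 _ _ 1 (by decide) rfl
    · exact minor1 _ _ 2 (by decide) rfl
    · exact minor1 _ _ 3 (by decide) rfl
    · exact minor1 _ _ 4 (by decide) rfl
    · exact minor2 _ _ 0 1 (by decide) (by decide) (by decide) rfl
    · exact minor2 _ _ 0 2 (by decide) (by decide) (by decide) rfl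
    · exact minor2 _ _ 0 3 (by decide) (by decide) (by decide) rfl
    · exact minor2 _ _ 0 4 (by decide) (by decide) (by decide) rfl
    · exact minor2 _ _ 1 2 (by decide) (by decide) (by decide) rfl
    · exact minor2 _ _ 1 3 (by decide) (by decide) (by decide) rfl
    · exact minor2 _ _ 1 4 (by decide) (by decide) (by decide) rfl
    · exact minor2 _ _ 2 3 (by decide) (by decide) (by decide) rfl
    · exact minor2 _ _ 2 4 (by decide) (by decide) (by decide) rfl
    · exact minor2 _ _ 3 4 (by decide) (by decide) (by decide) rfl
    · exact minor3 _ _ 0 1 2 (by decide) (by decide) (by decide) (by decide) (by decide) rfl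
    · exact minor3 _ _ 0 1 3 (by decide) (by decide) (by decide) (by decide) (by decide) rfl
    · exact minor3 _ _ 0 1 4 (by decide) (by decide) (by decide) (by decide) (by decide) rfl
    · exact minor3 _ _ 0 2 3 (by decide) (by decide) (by decide) (by decide) (by decide) rfl
    · exact minor3 _ _ 0 2 4 (by decide) (by decide) (by decide) (by decide) (by decide) rfl
    · exact minor3 _ _ 0 3 4 (by decide) (by decide) (by decide) (by decide) (by decide) rfl
    · exact minor3 _ _ 1 2 3 (by decide) (by decide) (by decide) (by decide) (by decide) rfl
    · exact minor3 _ _ 1 2 4 (by decide) (by decide) (by decide) (by decide) (by decide) rfl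
    · exact minor3 _ _ 1 3 4 (by decide) (by decide) (by decide) (by decide) (by decide) rfl
    · exact minor3 _ _ 2 3 4 (by decide) (by decide) (by decide) (by decide) (by decide) rfl
    · exact minor4 _ _ 0 1 2 3 (by decide) (by decide) (by decide) (by decide) (by decide) (by decide) (by decide) rfl
    · exact minor4 _ _ 0 1 2 4 (by decide) (by decide) (by decide) (by decide) (by decide) (by decide) (by decide) rfl
    · exact minor4 _ _ 0 1 3 4 (by decide) (by decide) (by decide) (by decide) (by decide) (by decide) (by decide) rfl
    · exact minor4 _ _ 0 2 3 4 (by decide) (by decide) (by decide) (by decide) (by decide) (by decide) (by decide) rfl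
    · exact minor4 _ _ 1 2 3 4 (by decide) (by decide) (by decide) (by decide) (by decide) (by decide) (by decide) rfl
  · rw [v30, dif_neg h, minT, List.getD_eq_default _ _ (by simp [colsT]; omega)]
    simp [minL]


lemma pev_xmon (m : List ℕ) : pev vx (xmon m) = mev v30 m := by
  induction m with
  | nil => simp [xmon]
  | cons i m ih =>
    have : xmon (i :: m) = mulP (minT i) (xmon m) := rfl
    rw [this, pev_mulP, ih, mev_cons, v30_eq]

lemma pev_xev (p : LPoly) : pev vx (xev p) = pev v30 p := by
  induction p with
  | nil => simp [xev]
  | cons t p ih =>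
    have : xev (t :: p) = mergeP 3000 (scl t.1 [] (xmon t.2)) (xev p) := rfl
    rw [this, pev_mergeP, pev_scl, ih, pev_cons, pev_xmon]; simp

lemma tabQ_zero : ∀ q ∈ tabQ, pev v30 q = 0 := by
  intro q hq
  have := List.all_eq_true.1 checkQ q hq
  rw [List.isEmpty_iff] at this
  rw [← pev_xev, this, pev_nil]

lemma tabG_zero : ∀ g ∈ tabG, pev v30 g = 0 := by
  intro g hg
  have := redP_sound v30 tabQ tabQ_zero _ _ (List.all_eq_true.1 checkG g hg)
  rwa [pev_sortP] at this

lemma phi5_vX (i : ℕ) : phi5 (vX i) = v30 i := by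
  unfold vX v30
  split <;> simp

lemma phi5_mev (m : List ℕ) : phi5 (mev vX m) = mev v30 m := by
  induction m with
  | nil => simp
  | cons a m ih => simp [ih, phi5_vX]

lemma phi5_pev (p : LPoly) : phi5 (pev vX p) = pev v30 p := by
  induction p with
  | nil => simp
  | cons t p ih => simp [ih, phi5_mev]

/-- exponent vector of a list monomial -/
noncomputable def ex (m : List ℕ) : Fin 30 →₀ ℕ :=
  Finsupp.equivFunOnFinite.symm fun i => m.count i.val

@[simp] lemma ex_apply (m : List ℕ) (i : Fin 30) : ex m i = m.count i.val := rfl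

lemma mev_vX (m : List ℕ) : mev vX m = monomial (ex m) 1 := by
  induction m with
  | nil =>
    have : ex [] = 0 := by ext i; simp
    simp [this]
  | cons a m ih =>
    rw [mev_cons, ih, vX]
    split
    · next h =>
      have : ex (a :: m) = Finsupp.single ⟨a, h⟩ 1 + ex m := by
        ext i
        simp [List.count_cons, Finsupp.single_apply, Fin.ext_iff, add_comm]
      rw [this, X, monomial_mul, one_mul]
    · next h =>
      have : ex (a :: m) = ex m := by
        ext i
        have : a ≠ i.val := by have := i.2; omega
        simp [this]
      rw [this, one_mul]


/-! ## Independence of the standard monomials of the straightening relations -/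

def pt (k : ℕ) : Fin 4 × Fin 5 := (Fin.ofNat 4 (k / 5), Fin.ofNat 5 (k % 5))

def cx (p : Fin 4 × Fin 5) : ℕ := (4 - p.1.val) * p.2.val

noncomputable def exx (m : List ℕ) : Fin 4 × Fin 5 →₀ ℕ :=
  (m.map fun k => Finsupp.single (pt k) 1).sum

def wlx (m : List ℕ) : ℕ := (m.map fun k => cx (pt k)).sum

noncomputable def WX : (Fin 4 × Fin 5 →₀ ℕ) →+ ℕ := Finsupp.weight cx

lemma mev_vx (m : List ℕ) : mev vx m = monomial (exx m) 1 := by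
  induction m with
  | nil => simp [exx]
  | cons a m ih => rw [mev_cons, ih, vx, X, monomial_mul, one_mul]; simp [exx, pt]

lemma WX_exx (m : List ℕ) : WX (exx m) = wlx m := by
  induction m with
  | nil => simp [exx, wlx]
  | cons a m ih =>
    have h1 : exx (a :: m) = Finsupp.single (pt a) 1 + exx m := by simp [exx]
    have h2 : wlx (a :: m) = cx (pt a) + wlx m := by simp [wlx]
    rw [h1, h2, map_add, ih, WX, Finsupp.weight_single, one_smul]

def LowX (n : ℕ) (r : TX) : Prop := ∀ m ∈ r.support, WX m < n

lemma LowX.zero (n : ℕ) : LowX n 0 := by intro m hm; simp at hm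

lemma LowX.add {n : ℕ} {r s : TX} (hr : LowX n r) (hs : LowX n s) : LowX n (r + s) := by
  intro m hm
  rcases Finset.mem_union.1 (support_add hm) with h | h
  · exact hr m h
  · exact hs m h

lemma LowX.mono {n k : ℕ} {r : TX} (hr : LowX n r) (h : n ≤ k) : LowX k r :=
  fun m hm => (hr m hm).trans_le h

lemma LowX.monomial {n : ℕ} {e : Fin 4 × Fin 5 →₀ ℕ} (c : ℚ) (h : WX e < n) :
    LowX n (monomial e c) := by
  intro m hm
  have := support_monomial_subset hm
  rw [Finset.mem_singleton] at this
  rwa [this]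

lemma LowX.mul {n k : ℕ} {r s : TX} (hr : LowX n r) (hs : LowX (k + 1) s) :
    LowX (n + k) (r * s) := by
  classical
  intro m hm
  obtain ⟨a, ha, b, hb, rfl⟩ := Finset.mem_add.1 (support_mul _ _ hm)
  have := hr a ha
  have := hs b hb
  rw [map_add]; omega

def TopF (f : TX) (e : Fin 4 × Fin 5 →₀ ℕ) : Prop :=
  ∃ c : ℚ, c ≠ 0 ∧ LowX (WX e) (f - monomial e c)

lemma TopF.one : TopF 1 0 := ⟨1, one_ne_zero, by simpa using LowX.zero _⟩

lemma TopF.mul {f g : TX} {d e : Fin 4 × Fin 5 →₀ ℕ} (hf : TopF f d) (hg : TopF g e) :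
    TopF (f * g) (d + e) := by
  obtain ⟨a, ha, hf⟩ := hf
  obtain ⟨b, hb, hg⟩ := hg
  refine ⟨a * b, mul_ne_zero ha hb, ?_⟩
  have h : f * g - monomial (d + e) (a * b) =
      (f - monomial d a) * (g - monomial e b) + (f - monomial d a) * monomial e b
        + (g - monomial e b) * monomial d a := by
    rw [← monomial_mul]; ring
  rw [h, map_add]
  refine ((hf.mul (hg.mono (Nat.le_succ _))).add (hf.mul (LowX.monomial b (Nat.lt_succ_self _)))).add ?_
  rw [add_comm]
  exact hg.mul (LowX.monomial a (Nat.lt_succ_self _))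

lemma TopF.pow {f : TX} {d : Fin 4 × Fin 5 →₀ ℕ} (hf : TopF f d) (n : ℕ) :
    TopF (f ^ n) (n • d) := by
  induction n with
  | zero => simpa using TopF.one
  | succ n ih => rw [pow_succ, succ_nsmul]; exact ih.mul hf

lemma TopF.prod {ι : Type*} (s : Finset ι) (f : ι → TX) (d : ι → Fin 4 × Fin 5 →₀ ℕ)
    (h : ∀ i ∈ s, TopF (f i) (d i)) : TopF (∏ i ∈ s, f i) (∑ i ∈ s, d i) := by
  classical
  induction s using Finset.induction_on with
  | empty => simpa using TopF.one
  | insert a s ha ih =>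
    rw [Finset.prod_insert ha, Finset.sum_insert ha]
    exact (h a (by simp)).mul (ih fun i hi => h i (by simp [hi]))

/-- lists: the head is the unique term of largest weight -/
def topL : LPoly → Bool
  | [] => false
  | (c, l) :: t => !decide (c = 0) && t.all fun s => Nat.blt (wlx s.2) (wlx l)

lemma low_pev (n : ℕ) (t : LPoly) (h : ∀ s ∈ t, wlx s.2 < n) : LowX n (pev vx t) := by
  induction t with
  | nil => simpa using LowX.zero n
  | cons s t ih =>
    rw [pev_cons, mev_vx]
    refine LowX.add ?_ (ih fun s hs => h s (by simp [hs]))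
    have : ((s.1 : ℤ) : TX) * monomial (exx s.2) 1 = monomial (exx s.2) (s.1 : ℚ) := by
      rw [← map_intCast (C : ℚ →+* TX), C_mul_monomial, mul_one]
    rw [this]
    exact LowX.monomial _ (by rw [WX_exx]; exact h s (by simp))

def leadT (i : ℕ) : List ℕ := ((minT i).headD (0, [])).2

lemma topL_sound (p : LPoly) (h : topL p = true) : TopF (pev vx p) (exx (p.headD (0, [])).2) := by
  match p with
  | [] => simp [topL] at h
  | (c, l) :: t =>
    simp only [topL, Bool.and_eq_true, Bool.not_eq_true', decide_eq_false_iff_not,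
      List.all_eq_true, Nat.blt_eq] at h
    refine ⟨c, by exact_mod_cast h.1, ?_⟩
    have : ((c : ℤ) : TX) * monomial (exx l) 1 = monomial (exx l) (c : ℚ) := by
      rw [← map_intCast (C : ℚ →+* TX), C_mul_monomial, mul_one]
    simp only [List.headD_cons]
    rw [pev_cons, mev_vx, this, add_sub_cancel_left, WX_exx]
    exact low_pev _ _ h.2

set_option maxRecDepth 100000 in
lemma checkTop : ∀ i : Fin 30, topL (minT i.val) = true := by decide +kernel

noncomputable def EE (u : Fin 30 →₀ ℕ) : Fin 4 × Fin 5 →₀ ℕ := ∑ i, u i • exx (leadT i.val)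

lemma TopF_phi (u : Fin 30 →₀ ℕ) : TopF (phi5 (monomial u 1)) (EE u) := by
  rw [phi5, aeval_monomial, map_one, one_mul, Finsupp.prod_fintype _ _ (by simp)]
  refine TopF.prod _ _ _ fun i _ => TopF.pow ?_ _
  have h := v30_eq i.val
  rw [v30, dif_pos i.2, phi5, aeval_X] at h
  rw [Fin.eta] at h
  rw [h]
  exact topL_sound _ (checkTop i)

def leP (i j : ℕ) : Prop :=
  ∀ x ∈ leadT i, ∃ y ∈ leadT j, (pt x).1 = (pt y).1 ∧ (pt x).2 ≤ (pt y).2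

instance (i j : ℕ) : Decidable (leP i j) := by unfold leP; infer_instance

lemma leP.refl (i : ℕ) : leP i i := fun x hx => ⟨x, hx, rfl, le_rfl⟩

lemma leP.trans {i j k : ℕ} (h : leP i j) (h' : leP j k) : leP i k := by
  intro x hx
  obtain ⟨y, hy, h1, h2⟩ := h x hx
  obtain ⟨z, hz, h3, h4⟩ := h' y hy
  exact ⟨z, hz, h1.trans h3, h2.trans h4⟩

set_option maxRecDepth 100000 in
lemma leP_antisymm : ∀ i j : Fin 30, leP i.val j.val → leP j.val i.val → i = j := by
  decide +kernel

set_option maxRecDepth 100000 in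
lemma leP_comp : ∀ i j : Fin 30, leP i.val j.val ∨ leP j.val i.val ∨
    [i.val, j.val] ∈ leadsOf tabQ ∨ [j.val, i.val] ∈ leadsOf tabQ := by
  decide +kernel

set_option maxRecDepth 100000 in
lemma leadT_ne : ∀ i : Fin 30, leadT i.val ≠ [] := by decide +kernel

def Std (L : List (List ℕ)) (u : Fin 30 →₀ ℕ) : Prop :=
  ∀ l ∈ L, ¬ ∀ i : Fin 30, l.count i.val ≤ u i

def Chain (u : Fin 30 →₀ ℕ) : Prop :=
  ∀ i j : Fin 30, u i ≠ 0 → u j ≠ 0 → leP i.val j.val ∨ leP j.val i.val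

lemma pair_dvd (u : Fin 30 →₀ ℕ) (i j : Fin 30) (hij : i ≠ j) (hi : u i ≠ 0) (hj : u j ≠ 0)
    (k : Fin 30) : [i.val, j.val].count k.val ≤ u k := by
  simp only [List.count_cons, List.count_nil, beq_iff_eq, ← Fin.ext_iff]
  by_cases h1 : i = k <;> by_cases h2 : j = k <;> simp [h1, h2]
  · exact absurd (h1.trans h2.symm) hij
  · subst h1; omega
  · subst h2; omega

lemma chain_of_std (u : Fin 30 →₀ ℕ) (h : Std (leadsOf tabQ) u) : Chain u := by
  intro i j hi hj
  by_cases hij : i = j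
  · subst hij; exact Or.inl (leP.refl _)
  rcases leP_comp i j with h1 | h1 | h1 | h1
  · exact Or.inl h1
  · exact Or.inr h1
  · exact absurd (pair_dvd u i j hij hi hj) (h _ h1)
  · exact absurd (pair_dvd u j i (Ne.symm hij) hj hi) (h _ h1)

lemma exists_top (u : Fin 30 →₀ ℕ) (h : Chain u) (hu : u ≠ 0) :
    ∃ i, u i ≠ 0 ∧ ∀ k, u k ≠ 0 → leP k.val i.val := by
  have key : ∀ s : Finset (Fin 30), s.Nonempty → s ⊆ u.support →
      ∃ i ∈ s, ∀ k ∈ s, leP k.val i.val := by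
    intro s hs
    induction hs using Finset.Nonempty.cons_induction with
    | singleton a => intro _; exact ⟨a, by simp, by simp [leP.refl]⟩
    | cons a s ha hs ih =>
      intro hsub
      obtain ⟨i, hi, hmax⟩ := ih fun x hx => hsub (by simp [hx])
      have h1 : u a ≠ 0 := by simpa using hsub (show a ∈ Finset.cons a s ha by simp)
      have h2 : u i ≠ 0 := by simpa using hsub (show i ∈ Finset.cons a s ha by simp [hi])
      rcases h a i h1 h2 with h3 | h3
      · refine ⟨i, by simp [hi], fun k hk => ?_⟩
        rcases Finset.mem_cons.1 hk with rfl | hk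
        · exact h3
        · exact hmax k hk
      · refine ⟨a, by simp, fun k hk => ?_⟩
        rcases Finset.mem_cons.1 hk with rfl | hk
        · exact leP.refl _
        · exact (hmax k hk).trans h3
  obtain ⟨i, hi, hm⟩ := key u.support (by simpa using hu) subset_rfl
  exact ⟨i, by simpa using hi, fun k hk => hm k (by simpa using hk)⟩

lemma exx_ne (m : List ℕ) (p : Fin 4 × Fin 5) : exx m p ≠ 0 ↔ ∃ x ∈ m, pt x = p := by
  induction m with
  | nil => simp [exx]
  | cons a m ih =>
    have h1 : exx (a :: m) = Finsupp.single (pt a) 1 + exx m := by simp [exx]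
    rw [h1, Finsupp.add_apply, Finsupp.single_apply]
    by_cases h : pt a = p
    · simp [h]
    · simp [h]; exact ih

lemma EE_ne (u : Fin 30 →₀ ℕ) (p : Fin 4 × Fin 5) :
    EE u p ≠ 0 ↔ ∃ k, u k ≠ 0 ∧ ∃ x ∈ leadT k.val, pt x = p := by
  rw [EE, Finsupp.finsetSum_apply, Ne, Finset.sum_eq_zero_iff]
  push Not
  simp only [Finset.mem_univ, true_and, Finsupp.smul_apply, smul_eq_mul, mul_ne_zero_iff, exx_ne]

lemma top_le (u v : Fin 30 →₀ ℕ) (h : EE u = EE v) (i j : Fin 30)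
    (hi : ∀ k, u k ≠ 0 → leP k.val i.val) (hj : v j ≠ 0) : leP j.val i.val := by
  intro x hx
  have h1 : EE v (pt x) ≠ 0 := (EE_ne v _).2 ⟨j, hj, x, hx, rfl⟩
  rw [← h] at h1
  obtain ⟨k, hk, y, hy, hxy⟩ := (EE_ne u _).1 h1
  rw [← hxy]
  exact hi k hk y hy

lemma EE_add (u v : Fin 30 →₀ ℕ) : EE (u + v) = EE u + EE v := by
  simp [EE, add_smul, Finset.sum_add_distrib]

lemma EE_inj_aux (n : ℕ) : ∀ u v : Fin 30 →₀ ℕ, u.degree = n → Chain u → Chain v →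
    EE u = EE v → u = v := by
  induction n with
  | zero =>
    intro u v hn hu hv h
    have hu0 : u = 0 := (Finsupp.degree_eq_zero_iff u).1 hn
    subst hu0
    by_contra hne
    obtain ⟨i, hi, -⟩ := exists_top v hv (Ne.symm hne)
    obtain ⟨x, hx⟩ := List.exists_mem_of_ne_nil _ (leadT_ne i)
    have h1 : EE v (pt x) ≠ 0 := (EE_ne v _).2 ⟨i, hi, x, hx, rfl⟩
    rw [← h] at h1
    simp [EE] at h1
  | succ n ih =>
    intro u v hn hu hv h
    have hu0 : u ≠ 0 := by rintro rfl; simp at hn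
    obtain ⟨i, hi, hi'⟩ := exists_top u hu hu0
    have hv0 : v ≠ 0 := by
      rintro rfl
      obtain ⟨x, hx⟩ := List.exists_mem_of_ne_nil _ (leadT_ne i)
      have h1 : EE u (pt x) ≠ 0 := (EE_ne u _).2 ⟨i, hi, x, hx, rfl⟩
      rw [h] at h1
      simp [EE] at h1
    obtain ⟨j, hj, hj'⟩ := exists_top v hv hv0
    have hij : i = j := leP_antisymm i j (top_le v u h.symm j i hj' hi) (top_le u v h i j hi' hj)
    subst hij
    have hu1 : Finsupp.single i 1 + (u - Finsupp.single i 1) = u :=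
      add_tsub_cancel_of_le (by rw [Finsupp.single_le_iff]; omega)
    have hv1 : Finsupp.single i 1 + (v - Finsupp.single i 1) = v :=
      add_tsub_cancel_of_le (by rw [Finsupp.single_le_iff]; omega)
    rw [← hu1, ← hv1]
    congr 1
    apply ih
    · have := congrArg Finsupp.degree hu1
      rw [map_add, hn, Finsupp.degree_single] at this
      omega
    · intro a b ha hb
      exact hu a b (by rw [Finsupp.tsub_apply] at ha; omega) (by rw [Finsupp.tsub_apply] at hb; omega)
    · intro a b ha hb
      exact hv a b (by rw [Finsupp.tsub_apply] at ha; omega) (by rw [Finsupp.tsub_apply] at hb; omega)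
    · have : EE (Finsupp.single i 1) + EE (u - Finsupp.single i 1) =
          EE (Finsupp.single i 1) + EE (v - Finsupp.single i 1) := by
        rw [← EE_add, ← EE_add, hu1, hv1, h]
      exact add_left_cancel this

/-- polynomials supported on `Q`-standard monomials and killed by `phi5` vanish -/
lemma Qstd_indep (f : PX) (hf : ∀ u ∈ f.support, Std (leadsOf tabQ) u) (h : phi5 f = 0) :
    f = 0 := by
  by_contra hne
  have hs : f.support.Nonempty := by simpa using hne
  obtain ⟨u, hu, hmax⟩ := Finset.exists_max_image f.support (fun u => WX (EE u)) hs
  have h1 : coeff (EE u) (phi5 f) = ∑ v ∈ f.support, coeff v f * coeff (EE u) (phi5 (monomial v 1)) := by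
    conv_lhs => rw [f.as_sum, map_sum, coeff_sum]
    refine Finset.sum_congr rfl fun v _ => ?_
    have : monomial v (coeff v f) = coeff v f • monomial v (1 : ℚ) := by
      rw [smul_monomial, smul_eq_mul, mul_one]
    rw [this, map_smul, coeff_smul, smul_eq_mul]
  rw [h, coeff_zero, Finset.sum_eq_single u] at h1
  · obtain ⟨c, hc, hl⟩ := TopF_phi u
    have h2 : coeff (EE u) (phi5 (monomial u 1) - monomial (EE u) c) = 0 := by
      by_contra h3
      exact lt_irrefl _ (hl _ (mem_support_iff.2 h3))
    rw [coeff_sub, coeff_monomial, if_pos rfl] at h2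
    have h3 : coeff u f ≠ 0 := mem_support_iff.1 hu
    have h4 : coeff (EE u) (phi5 (monomial u 1)) = c := by linarith
    rw [h4] at h1
    exact mul_ne_zero h3 hc h1.symm
  · intro v hv hvu
    have h4 : EE v ≠ EE u := fun h4 => hvu
      (EE_inj_aux _ v u rfl (chain_of_std v (hf v hv)) (chain_of_std u (hf u hu)) h4)
    obtain ⟨c, hc, hl⟩ := TopF_phi v
    have h2 : coeff (EE u) (phi5 (monomial v 1) - monomial (EE v) c) = 0 := by
      by_contra h3
      exact absurd (hl _ (mem_support_iff.2 h3)) (not_lt.2 (hmax v hv))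
    rw [coeff_sub, coeff_monomial, if_neg h4, sub_zero] at h2
    rw [h2, mul_zero]
  · intro h2; exact absurd hu h2


/-! ## Counting standard monomials -/

def Dv (l : List ℕ) (u : Fin 30 →₀ ℕ) : Prop := ∀ i : Fin 30, l.count i.val ≤ u i

lemma Std_iff (L : List (List ℕ)) (u : Fin 30 →₀ ℕ) : Std L u ↔ ∀ l ∈ L, ¬ Dv l u := Iff.rfl

open Classical in
noncomputable def stdF (L : List (List ℕ)) (n : ℕ) : Finset (Fin 30 →₀ ℕ) :=
  (Finset.finsuppAntidiag Finset.univ n).filter (Std L)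

lemma mem_stdF (L : List (List ℕ)) (n : ℕ) (u : Fin 30 →₀ ℕ) :
    u ∈ stdF L n ↔ u.degree = n ∧ Std L u := by
  simp [stdF, Finset.mem_finsuppAntidiag, Finsupp.degree_eq_sum]

noncomputable def cnt (L : List (List ℕ)) (n : ℕ) : ℤ := (stdF L n).card

noncomputable def cz (x : Fin 30) (L : List (List ℕ)) (n : ℕ) : ℤ :=
  ((stdF L n).filter fun u => u x = 0).card

set_option linter.constructorNameAsVariable false in
lemma cnt_zero (x : Fin 30) (L : List (List ℕ)) : cnt L 0 = cz x L 0 := by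
  unfold cnt cz
  have key : ∀ u ∈ stdF L 0, u x = 0 := by
    intro u hu
    rw [mem_stdF] at hu
    rw [(Finsupp.degree_eq_zero_iff u).1 hu.1, Finsupp.zero_apply]
  rw [Finset.filter_true_of_mem key]

lemma cnt_succ (x : Fin 30) (L L' : List (List ℕ))
    (h : ∀ u, Std L (u + Finsupp.single x 1) ↔ Std L' u) (n : ℕ) :
    cnt L (n + 1) = cnt L' n + cz x L (n + 1) := by
  unfold cnt cz
  rw [← Finset.card_filter_add_card_filter_not (s := stdF L (n + 1)) (fun u => u x = 0)]
  push_cast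
  rw [add_comm]
  congr 2
  symm
  refine Finset.card_bij' (fun u _ => u + Finsupp.single x 1) (fun u _ => u - Finsupp.single x 1)
    ?_ ?_ ?_ ?_
  · intro u hu
    rw [mem_stdF] at hu
    rw [Finset.mem_filter, mem_stdF, h]
    refine ⟨⟨?_, hu.2⟩, ?_⟩
    · rw [map_add, hu.1, Finsupp.degree_single]
    · simp
  · intro u hu
    rw [Finset.mem_filter, mem_stdF] at hu
    have hu1 : (u - Finsupp.single x 1) + Finsupp.single x 1 = u :=
      tsub_add_cancel_of_le (by rw [Finsupp.single_le_iff]; omega)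
    rw [mem_stdF, ← h, hu1]
    refine ⟨?_, hu.1.2⟩
    have := congrArg Finsupp.degree hu1
    rw [map_add, hu.1.1, Finsupp.degree_single] at this
    omega
  · intro u hu
    simp
  · intro u hu
    rw [Finset.mem_filter] at hu
    exact tsub_add_cancel_of_le (by rw [Finsupp.single_le_iff]; omega)

lemma hasN_iff (x : ℕ) (l : List ℕ) : hasN x l = true ↔ x ∈ l := by
  induction l with
  | nil => simp [hasN]
  | cons a l ih =>
    rw [hasN]
    cases hb : Nat.beq a x
    · have : a ≠ x := Nat.ne_of_beq_eq_false hb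
      simp [ih, Ne.symm this]
    · have := Nat.eq_of_beq_eq_true hb
      simp [this]

lemma delN_count (x : ℕ) (l : List ℕ) (h : x ∈ l) (i : ℕ) :
    l.count i = (delN x l).count i + if x = i then 1 else 0 := by
  induction l with
  | nil => simp at h
  | cons a l ih =>
    rw [delN]
    cases hb : Nat.beq a x
    · have hax : a ≠ x := Nat.ne_of_beq_eq_false hb
      have h' : x ∈ l := by
        rcases List.mem_cons.1 h with h | h
        · exact absurd h.symm hax
        · exact h
      simp only [cond_false, List.count_cons]
      rw [ih h']; omega
    · have := Nat.eq_of_beq_eq_true hb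
      simp [this, List.count_cons]

lemma subsL_sound (l m : List ℕ) (h : subsL l m = true) : l.Sublist m := by
  induction m generalizing l with
  | nil => cases l <;> simp_all [subsL]
  | cons b m ih =>
    cases l with
    | nil => simp
    | cons a l =>
      rw [subsL] at h
      cases hb : Nat.beq a b
      · rw [hb] at h
        exact List.Sublist.cons _ (ih _ (by simpa using h))
      · rw [hb] at h
        have := Nat.eq_of_beq_eq_true hb
        subst this
        exact List.Sublist.cons_cons _ (ih _ (by simpa using h))

lemma Dv_old (x : Fin 30) (l : List ℕ) (h : x.val ∉ l) (u : Fin 30 →₀ ℕ) :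
    Dv l (u + Finsupp.single x 1) ↔ Dv l u := by
  refine forall_congr' fun i => ?_
  rw [Finsupp.add_apply, Finsupp.single_apply]
  by_cases hx : x = i
  · subst hx
    simp [List.count_eq_zero_of_not_mem h]
  · simp [hx]

lemma Dv_new (x : Fin 30) (l : List ℕ) (h : x.val ∈ l) (u : Fin 30 →₀ ℕ) :
    Dv l (u + Finsupp.single x 1) ↔ Dv (delN x.val l) u := by
  refine forall_congr' fun i => ?_
  rw [Finsupp.add_apply, Finsupp.single_apply, delN_count x.val l h]
  by_cases hx : x = i
  · subst hx
    simp
  · simp [hx, ← Fin.ext_iff]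

lemma mem_oldL (x : ℕ) (L : List (List ℕ)) (l : List ℕ) : l ∈ oldL x L ↔ l ∈ L ∧ x ∉ l := by
  rw [oldL, List.mem_filter, ← hasN_iff]; simp

lemma mem_newL (x : ℕ) (L : List (List ℕ)) (l : List ℕ) :
    l ∈ newL x L ↔ ∃ m ∈ L, x ∈ m ∧ delN x m = l := by
  rw [newL, List.mem_map]; simp only [List.mem_filter, hasN_iff, and_assoc]

lemma Std_old (x : Fin 30) (L : List (List ℕ)) (u : Fin 30 →₀ ℕ) :
    Std (oldL x.val L) (u + Finsupp.single x 1) ↔ Std (oldL x.val L) u := by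
  rw [Std_iff, Std_iff]
  refine forall₂_congr fun l hl => ?_
  rw [Dv_old x l ((mem_oldL _ _ _).1 hl).2]

lemma Std_quo (x : Fin 30) (L : List (List ℕ)) (u : Fin 30 →₀ ℕ) :
    Std L (u + Finsupp.single x 1) ↔ Std (quoL x.val L) u := by
  rw [Std_iff, Std_iff]
  constructor
  · intro h l hl
    rw [quoL, List.mem_append, List.mem_filter] at hl
    rcases hl with hl | hl
    · obtain ⟨m, hm, hx, rfl⟩ := (mem_newL _ _ _).1 hl
      rw [← Dv_new x m hx]
      exact h m hm
    · have := (mem_oldL _ _ _).1 hl.1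
      rw [← Dv_old x l this.2]
      exact h l this.1
  · intro h l hl
    by_cases hx : x.val ∈ l
    · rw [Dv_new x l hx]
      exact h _ (by rw [quoL, List.mem_append]; exact Or.inl ((mem_newL _ _ _).2 ⟨l, hl, hx, rfl⟩))
    · rw [Dv_old x l hx]
      by_cases hs : ((newL x.val L).any fun k => subsL k l) = true
      · obtain ⟨k, hk, hkl⟩ := List.any_eq_true.1 hs
        intro hd
        refine h k (by rw [quoL, List.mem_append]; exact Or.inl hk) fun i => ?_
        exact ((subsL_sound _ _ hkl).count_le _).trans (hd i)
      · refine h l ?_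
        rw [quoL, List.mem_append, List.mem_filter]
        exact Or.inr ⟨(mem_oldL _ _ _).2 ⟨hl, hx⟩, by simpa using hs⟩

lemma cz_old (x : Fin 30) (L : List (List ℕ)) (n : ℕ) : cz x (oldL x.val L) n = cz x L n := by
  unfold cz
  congr 2
  ext u
  simp only [Finset.mem_filter, mem_stdF, and_assoc]
  refine and_congr_right fun _ => ?_
  rw [Std_iff, Std_iff]
  constructor
  · rintro ⟨h, h0⟩
    refine ⟨fun l hl hd => ?_, h0⟩
    by_cases hx : x.val ∈ l
    · have := hd x
      rw [h0] at this
      have := List.count_pos_iff.2 hx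
      omega
    · exact h l ((mem_oldL _ _ _).2 ⟨hl, hx⟩) hd
  · rintro ⟨h, h0⟩
    exact ⟨fun l hl => h l ((mem_oldL _ _ _).1 hl).1, h0⟩

lemma cnt_rec_zero (x : Fin 30) (L : List (List ℕ)) : cnt L 0 = cnt (oldL x.val L) 0 := by
  rw [cnt_zero x, cnt_zero x, cz_old]

lemma cnt_rec_succ (x : Fin 30) (L : List (List ℕ)) (n : ℕ) :
    cnt L (n + 1) = cnt (quoL x.val L) n + (cnt (oldL x.val L) (n + 1) - cnt (oldL x.val L) n) := by
  rw [cnt_succ x L _ (Std_quo x L), cnt_succ x (oldL x.val L) _ (Std_old x L), cz_old]; ring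

noncomputable def app : List ℤ → ℕ → ℤ
  | [], _ => 0
  | k :: _, 0 => k * cnt [] 0
  | k :: K, n + 1 => k * cnt [] (n + 1) + app K n

lemma app_cons_zero (k : ℤ) (K : List ℤ) : app (k :: K) 0 = k * cnt [] 0 := rfl
lemma app_cons_succ (k : ℤ) (K : List ℤ) (n : ℕ) :
    app (k :: K) (n + 1) = k * cnt [] (n + 1) + app K n := rfl
lemma app_nil (n : ℕ) : app [] n = 0 := by cases n <;> rfl

lemma app_addK (a b : List ℤ) (n : ℕ) : app (addK a b) n = app a n + app b n := by
  induction a generalizing b n with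
  | nil => simp [addK, app_nil]
  | cons x a ih =>
    cases b with
    | nil => simp [addK, app_nil]
    | cons y b =>
      cases n with
      | zero => simp only [addK, app_cons_zero]; ring
      | succ n => simp only [addK, app_cons_succ, ih]; ring

lemma app_neg (b : List ℤ) (n : ℕ) : app (b.map Neg.neg) n = - app b n := by
  induction b generalizing n with
  | nil => simp [app_nil]
  | cons y b ih =>
    cases n with
    | zero => simp only [List.map_cons, app_cons_zero]; ring
    | succ n => simp only [List.map_cons, app_cons_succ, ih]; ring

lemma app_subK (a b : List ℤ) (n : ℕ) : app (subK a b) n = app a n - app b n := by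
  induction a generalizing b n with
  | nil => simp [subK, app_nil, app_neg]
  | cons x a ih =>
    cases b with
    | nil => simp [subK, app_nil]
    | cons y b =>
      cases n with
      | zero => simp only [subK, app_cons_zero]; ring
      | succ n => simp only [subK, app_cons_succ, ih]; ring

lemma kpoly_sound (fuel : ℕ) (L : List (List ℕ)) (K : List ℤ) (h : kpoly fuel L = some K)
    (n : ℕ) : cnt L n = app K n := by
  induction fuel generalizing L K n with
  | zero =>
    cases L with
    | nil =>
      simp only [kpoly, Option.some.injEq] at h
      subst h
      cases n with
      | zero => simp [app_cons_zero]
      | succ n => simp [app_cons_succ, app_nil]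
    | cons l L => simp [kpoly] at h
  | succ fuel ih =>
    match L with
    | [] =>
      simp only [kpoly, Option.some.injEq] at h
      subst h
      cases n with
      | zero => simp [app_cons_zero]
      | succ n => simp [app_cons_succ, app_nil]
    | [] :: L =>
      simp only [kpoly, Option.some.injEq] at h
      subst h
      rw [app_nil, cnt, Nat.cast_eq_zero, Finset.card_eq_zero, Finset.eq_empty_iff_forall_notMem]
      intro u hu
      exact ((mem_stdF _ _ _).1 hu).2 [] (by simp) (by simp)
    | (x :: l) :: L =>
      rw [kpoly] at h
      by_cases hx : x < 30
      · have hx' : Nat.blt x 30 = true := by simpa using hx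
        rw [hx', cond_true] at h
        split at h
        · next a b ha hb =>
          simp only [Option.some.injEq] at h
          subst h
          rw [app_addK, app_subK]
          cases n with
          | zero =>
            rw [cnt_rec_zero ⟨x, hx⟩, ih _ _ hb]
            simp [app_cons_zero]
          | succ n =>
            rw [cnt_rec_succ ⟨x, hx⟩, ih _ _ hb, ih _ _ ha, ih _ _ hb]
            simp only [app_cons_succ]; ring
        · simp at h
      · have hx' : Nat.blt x 30 = false := by
          rw [Bool.eq_false_iff]; simpa using hx
        rw [hx', cond_false] at h
        simp at h

lemma app_all_zero (a : List ℤ) (h : ∀ z ∈ a, z = 0) (n : ℕ) : app a n = 0 := by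
  induction a generalizing n with
  | nil => exact app_nil n
  | cons x a ih =>
    have hx := h x (by simp)
    cases n with
    | zero => simp [app_cons_zero, hx]
    | succ n => simp [app_cons_succ, hx, ih fun z hz => h z (by simp [hz])]

lemma cnt_eq (n : ℕ) : (stdF (leadsOf tabG) n).card = (stdF (leadsOf tabQ) n).card := by
  have h := checkK
  cases ha : kpoly 1000 (leadsOf tabG) with
  | none => rw [ha] at h; simp [sameK] at h
  | some a =>
    cases hb : kpoly 1000 (leadsOf tabQ) with
    | none => rw [ha, hb] at h; simp [sameK] at h
    | some b =>
      rw [ha, hb] at h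
      simp only [sameK, List.all_eq_true, decide_eq_true_eq] at h
      have h1 := app_all_zero _ h n
      rw [app_subK, ← kpoly_sound _ _ _ ha, ← kpoly_sound _ _ _ hb, cnt, cnt] at h1
      omega


/-! ## Weights, reduction modulo the Gröbner basis -/

def wl : List ℕ := [0, 512, 384, 74, 0, 256, 72, 768, 584, 456, 0, 64, 320, 832, 58, 56,
        568, 440, 111, 48, 304, 108, 816, 620, 492, 0, 32, 96, 352, 864]

def wv (i : Fin 30) : ℕ := wl.getD i.val 0

noncomputable def wR : Fin 30 → ℝ := ![0, 512, 384, 74, 0, 256, 72, 768, 584, 456, 0, 64, 320,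
        832, 58, 56, 568, 440, 111, 48, 304, 108, 816, 620, 492, 0, 32, 96, 352, 864]

lemma wR_eq (i : Fin 30) : wR i = (wv i : ℝ) := by
  fin_cases i <;> simp [wR, wv, wl]

noncomputable def WW : (Fin 30 →₀ ℕ) →+ ℕ := Finsupp.weight wv

lemma wt_eq (u : Fin 30 →₀ ℕ) : wt wR u = (WW u : ℝ) := by
  rw [wt, WW, Finsupp.weight_apply, Finsupp.sum_fintype _ _ (by simp)]
  push_cast
  exact Finset.sum_congr rfl fun i _ => by rw [wR_eq]; push_cast [smul_eq_mul]; ring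

noncomputable def whc (n : ℕ) : PX →ₗ[ℚ] PX := weightedHomogeneousComponent wv n

lemma initialForm_eq (f : PX) (n : ℕ) (h : ∀ u ∈ f.support, n ≤ WW u)
    (h' : ∃ u ∈ f.support, WW u = n) : initialForm wR f = whc n f := by
  classical
  rw [whc, weightedHomogeneousComponent_apply, initialForm, Finset.sum_filter]
  refine Finset.sum_congr rfl fun u hu => ?_
  obtain ⟨u0, hu0, rfl⟩ := h'
  have : (∀ v ∈ f.support, wt wR u ≤ wt wR v) ↔ Finsupp.weight wv u = WW u0 := by
    simp only [wt_eq, Nat.cast_le]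
    change _ ↔ WW u = _
    constructor
    · intro h1; exact le_antisymm (h1 u0 hu0) (h u hu)
    · intro h1 v hv; rw [h1]; exact h v hv
  simp only [this]

lemma whc_monomial (n : ℕ) (u : Fin 30 →₀ ℕ) (a : ℚ) :
    whc n (monomial u a) = if WW u = n then monomial u a else 0 := by
  split
  · next h =>
    exact (isWeightedHomogeneous_monomial wv u a h).weightedHomogeneousComponent_same
  · next h =>
    exact (isWeightedHomogeneous_monomial wv u a rfl).weightedHomogeneousComponent_ne n (Ne.symm h)

def wN (m : List ℕ) : ℕ := (m.map fun i => wl.getD i 0).sum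

lemma ex_cons (a : ℕ) (m : List ℕ) (h : a < 30) :
    ex (a :: m) = Finsupp.single ⟨a, h⟩ 1 + ex m := by
  ext i
  simp [List.count_cons, Finsupp.single_apply, Fin.ext_iff, add_comm]

lemma ex_cons' (a : ℕ) (m : List ℕ) (h : ¬ a < 30) : ex (a :: m) = ex m := by
  ext i
  have : a ≠ i.val := by have := i.2; omega
  simp [this]

lemma WW_ex (m : List ℕ) : WW (ex m) = wN m := by
  induction m with
  | nil =>
    have : ex [] = 0 := by ext i; simp
    simp [this, wN]
  | cons a m ih =>
    have h2 : wN (a :: m) = wl.getD a 0 + wN m := by simp [wN]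
    by_cases h : a < 30
    · rw [ex_cons a m h, map_add, ih, h2, WW, Finsupp.weight_single, one_smul]; rfl
    · rw [ex_cons' a m h, ih, h2, List.getD_eq_default _ _ (by simp [wl]; omega), zero_add]

lemma degree_ex (m : List ℕ) (h : ∀ a ∈ m, a < 30) : (ex m).degree = m.length := by
  induction m with
  | nil =>
    have : ex [] = 0 := by ext i; simp
    simp [this]
  | cons a m ih =>
    rw [ex_cons a m (h a (by simp)), map_add, ih fun b hb => h b (by simp [hb]),
      Finsupp.degree_single, List.length_cons, add_comm]

def rN (m : List ℕ) : ℕ := 100 * wN m + (m.count 20 + m.count 22)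

noncomputable def rho (u : Fin 30 →₀ ℕ) : ℕ := 100 * WW u + (u 20 + u 22)

lemma rho_ex (m : List ℕ) : rho (ex m) = rN m := by
  rw [rho, WW_ex, rN]; rfl

lemma rho_add (u v : Fin 30 →₀ ℕ) : rho (u + v) = rho u + rho v := by
  simp only [rho, map_add, Finsupp.add_apply]; ring

lemma rho_le (u : Fin 30 →₀ ℕ) : rho u ≤ 100000 * u.degree := by
  have h1 : WW u ≤ 900 * u.degree := by
    rw [WW, Finsupp.weight_apply, Finsupp.sum_fintype _ _ (by simp), Finsupp.degree_eq_sum,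
      Finset.mul_sum]
    refine Finset.sum_le_sum fun i _ => ?_
    have : ∀ i : Fin 30, wv i ≤ 900 := by decide
    rw [smul_eq_mul, mul_comm]
    exact Nat.mul_le_mul_right _ (this i)
  have h2 : ∀ i, u i ≤ u.degree := fun i => Finsupp.le_degree i u
  have := h2 20
  have := h2 22
  rw [rho]; omega

def okG : LPoly → Bool
  | [] => false
  | (c, l) :: t => decide (c = 1) && l.all (fun a => Nat.blt a 30) &&
      (t.all fun s => Nat.blt (rN l) (rN s.2) && Nat.ble (wN l) (wN s.2) &&
        Nat.beq s.2.length l.length && s.2.all fun a => Nat.blt a 30) &&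
      Nat.ble (t.filter fun s => Nat.beq (wN s.2) (wN l)).length 1

set_option maxRecDepth 100000 in
lemma checkOk : (tabG.all okG) = true := by decide +kernel

lemma term_eq (c : Fin 30 →₀ ℕ) (s : ℤ × List ℕ) :
    (monomial c (1 : ℚ)) * (((s.1 : ℤ) : PX) * mev vX s.2) =
      (s.1 : ℚ) • monomial (c + ex s.2) 1 := by
  rw [mev_vX, mul_left_comm, monomial_mul, ← map_intCast (C : ℚ →+* PX), one_mul, C_mul']

lemma whc_pev (n : ℕ) (c : Fin 30 →₀ ℕ) (p : LPoly) :
    whc n (monomial c (1 : ℚ) * pev vX p) =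
      monomial c 1 * pev vX (p.filter fun s => decide (WW c + wN s.2 = n)) := by
  induction p with
  | nil => simp
  | cons s p ih =>
    rw [pev_cons, mul_add, map_add, ih, term_eq, map_smul, whc_monomial, map_add, WW_ex,
      List.filter_cons]
    by_cases h : WW c + wN s.2 = n
    · simp only [h, decide_true, if_true, pev_cons, mul_add, term_eq]
    · simp [h]

lemma support_pev_card (p : LPoly) : (pev vX p).support.card ≤ p.length := by
  classical
  induction p with
  | nil => simp
  | cons s p ih =>
    have h := term_eq 0 s
    rw [show monomial (0 : Fin 30 →₀ ℕ) (1 : ℚ) = 1 from rfl, one_mul, zero_add] at h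
    rw [pev_cons, List.length_cons, h]
    refine (Finset.card_le_card support_add).trans ((Finset.card_union_le _ _).trans ?_)
    have : ((s.1 : ℚ) • monomial (ex s.2) (1 : ℚ)).support.card ≤ 1 := by
      rw [smul_monomial]
      exact (Finset.card_le_card support_monomial_subset).trans (by simp)
    omega

structure GElt (l : List ℕ) (t : LPoly) : Prop where
  lt30 : ∀ a ∈ l, a < 30
  rlt : ∀ s ∈ t, rN l < rN s.2
  wle : ∀ s ∈ t, wN l ≤ wN s.2
  len : ∀ s ∈ t, s.2.length = l.length
  tlt : ∀ s ∈ t, ∀ a ∈ s.2, a < 30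
  two : (t.filter fun s => decide (wN s.2 = wN l)).length ≤ 1
  ker : phi5 (pev vX ((1, l) :: t)) = 0

lemma tabG_elt (g : LPoly) (hg : g ∈ tabG) : ∃ l t, g = (1, l) :: t ∧ GElt l t := by
  have h := List.all_eq_true.1 checkOk g hg
  have h0 := tabG_zero g hg
  rw [← phi5_pev] at h0
  match g with
  | [] => simp [okG] at h
  | (c, l) :: t =>
    simp only [okG, Bool.and_eq_true, decide_eq_true_eq, List.all_eq_true, Nat.blt_eq,
      Nat.ble_eq, Nat.beq_eq] at h
    obtain ⟨⟨⟨h1, h2⟩, h3⟩, h4⟩ := h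
    subst h1
    refine ⟨l, t, rfl, h2, fun s hs => (h3 s hs).1.1.1, fun s hs => (h3 s hs).1.1.2,
      fun s hs => (h3 s hs).1.2, fun s hs => (h3 s hs).2, ?_, h0⟩
    convert h4 using 4 with s
    rw [Bool.eq_iff_iff]; simp

noncomputable def Jb : Ideal PX :=
  Ideal.span {b | b ∈ initialIdeal wR I5 ∧ b.support.card ≤ 2}

/-- coefficient vanishing for tails -/
lemma coeff_pev_zero (e : Fin 30 →₀ ℕ) (p : LPoly) (h : ∀ s ∈ p, ex s.2 ≠ e) :
    coeff e (pev vX p) = 0 := by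
  induction p with
  | nil => simp
  | cons s p ih =>
    have h' := term_eq 0 s
    rw [show monomial (0 : Fin 30 →₀ ℕ) (1 : ℚ) = 1 from rfl, one_mul, zero_add] at h'
    rw [pev_cons, coeff_add, ih fun s hs => h s (by simp [hs]), h', coeff_smul, coeff_monomial,
      if_neg (h s (by simp))]
    simp

lemma mem_support_pev (e : Fin 30 →₀ ℕ) (p : LPoly) (h : e ∈ (pev vX p).support) :
    ∃ s ∈ p, ex s.2 = e := by
  by_contra h'
  push Not at h'
  exact mem_support_iff.1 h (coeff_pev_zero e p h')

lemma GElt.coeff {l : List ℕ} {t : LPoly} (h : GElt l t) :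
    MvPolynomial.coeff (ex l) (pev vX ((1, l) :: t)) = 1 := by
  rw [pev_cons, coeff_add, coeff_pev_zero (ex l) t, mev_vX]
  · simp
  · intro s hs he
    have := h.rlt s hs
    rw [← rho_ex, ← rho_ex, he] at this
    exact lt_irrefl _ this

lemma GElt.init {l : List ℕ} {t : LPoly} (h : GElt l t) :
    pev vX (((1, l) :: t).filter fun s => decide (wN s.2 = wN l)) ∈ initialIdeal wR I5 := by
  have h1 : ex l ∈ (pev vX ((1, l) :: t)).support := by
    rw [mem_support_iff, h.coeff]; exact one_ne_zero
  refine Ideal.subset_span ⟨pev vX ((1, l) :: t), h.ker, ?_, ?_⟩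
  · intro h0; rw [h0] at h1; simp at h1
  · rw [initialForm_eq _ (wN l) ?_ ⟨ex l, h1, WW_ex l⟩]
    · have := whc_pev (wN l) 0 ((1, l) :: t)
      rw [show monomial (0 : Fin 30 →₀ ℕ) (1 : ℚ) = 1 from rfl, one_mul, one_mul, map_zero] at this
      rw [this]
      simp only [zero_add]
    · intro u hu
      obtain ⟨s, hs, rfl⟩ := mem_support_pev _ _ hu
      rw [WW_ex]
      rcases List.mem_cons.1 hs with rfl | hs
      · exact le_rfl
      · exact h.wle s hs

lemma GElt.mem_Jb {l : List ℕ} {t : LPoly} (h : GElt l t) :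
    pev vX (((1, l) :: t).filter fun s => decide (wN s.2 = wN l)) ∈ Jb := by
  refine Ideal.subset_span ⟨h.init, (support_pev_card _).trans ?_⟩
  rw [List.filter_cons]
  have := h.two
  simp only [decide_true, if_true, List.length_cons]
  omega

def Red (n d : ℕ) (f : PX) : Prop :=
  ∃ r : PX, (∀ v ∈ r.support, Std (leadsOf tabG) v ∧ v.degree ≤ d) ∧ phi5 f = phi5 r ∧
    whc n f - whc n r ∈ Jb

lemma Red.zero (n d : ℕ) : Red n d 0 := ⟨0, by simp, rfl, by simp⟩

lemma Red.add {n d : ℕ} {f g : PX} (hf : Red n d f) (hg : Red n d g) : Red n d (f + g) := by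
  obtain ⟨r, h1, h2, h3⟩ := hf
  obtain ⟨s, h4, h5, h6⟩ := hg
  refine ⟨r + s, ?_, by rw [map_add, map_add, h2, h5], ?_⟩
  · intro v hv
    rcases Finset.mem_union.1 (support_add hv) with h | h
    · exact h1 v h
    · exact h4 v h
  · rw [map_add, map_add, add_sub_add_comm]
    exact Ideal.add_mem _ h3 h6

lemma Red.smul {n d : ℕ} {f : PX} (a : ℚ) (hf : Red n d f) : Red n d (a • f) := by
  obtain ⟨r, h1, h2, h3⟩ := hf
  refine ⟨a • r, fun v hv => h1 v (support_smul hv), by rw [map_smul, map_smul, h2], ?_⟩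
  rw [map_smul, map_smul, ← smul_sub, ← C_mul']
  exact Ideal.mul_mem_left _ _ h3

lemma Red_monomial (n d : ℕ) (N : ℕ) : ∀ u : Fin 30 →₀ ℕ, 100000 * u.degree - rho u ≤ N →
    n ≤ WW u → u.degree ≤ d → Red n d (monomial u 1) := by
  induction N using Nat.strong_induction_on with
  | _ N ih =>
  intro u hN hn hd
  by_cases hs : Std (leadsOf tabG) u
  · refine ⟨monomial u 1, ?_, rfl, by simp⟩
    intro v hv
    have := support_monomial_subset hv
    rw [Finset.mem_singleton] at this
    rw [this]; exact ⟨hs, hd⟩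
  · rw [Std] at hs
    push Not at hs
    obtain ⟨l', hl', hdv⟩ := hs
    obtain ⟨g, hg, rfl⟩ := List.mem_map.1 hl'
    obtain ⟨l, t, rfl, hG⟩ := tabG_elt g hg
    simp only [List.headD_cons, List.count_reverse] at hdv
    set c := u - ex l with hc
    have hu : c + ex l = u := tsub_add_cancel_of_le (fun i => hdv i)
    have e1 : monomial u (1 : ℚ) = monomial c 1 * pev vX ((1, l) :: t) +
        (-1 : ℚ) • (monomial c 1 * pev vX t) := by
      rw [pev_cons, mev_vX, mul_add]
      simp [monomial_mul, hu]
    rw [e1]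
    refine Red.add ?_ (Red.smul _ ?_)
    · refine ⟨0, by simp, by rw [map_mul, hG.ker, mul_zero, map_zero], ?_⟩
      rw [map_zero, sub_zero, whc_pev]
      refine Ideal.mul_mem_left _ _ ?_
      have hw : WW c + wN l = WW u := by rw [← WW_ex, ← map_add, hu]
      by_cases hnu : WW u = n
      · have : (fun s : ℤ × List ℕ => decide (WW c + wN s.2 = n)) =
            fun s => decide (wN s.2 = wN l) := by
          funext s; rw [decide_eq_decide]; omega
        rw [this]; exact hG.mem_Jb
      · have : (((1, l) :: t).filter fun s => decide (WW c + wN s.2 = n)) = [] := by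
          rw [List.filter_eq_nil_iff]
          intro s hs
          rw [decide_eq_true_eq]
          rcases List.mem_cons.1 hs with rfl | hs
          · simp only; omega
          · have := hG.wle s hs; omega
        rw [this, pev_nil]; exact Ideal.zero_mem _
    · have key : ∀ t' : LPoly, (∀ s ∈ t', s ∈ t) → Red n d (monomial c 1 * pev vX t') := by
        intro t'
        induction t' with
        | nil => intro _; simpa using Red.zero n d
        | cons s t' iht =>
          intro hsub
          rw [pev_cons, mul_add, term_eq]
          refine Red.add (Red.smul _ ?_) (iht fun s hs => hsub s (by simp [hs]))
          have hst := hsub s (by simp)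
          have hd2 : (c + ex s.2).degree = u.degree := by
            rw [← hu, map_add, map_add, degree_ex _ (hG.tlt s hst), degree_ex _ hG.lt30,
              hG.len s hst]
          have hr : rho u < rho (c + ex s.2) := by
            rw [← hu, rho_add, rho_add, rho_ex, rho_ex]
            have := hG.rlt s hst; omega
          have hw : WW u ≤ WW (c + ex s.2) := by
            rw [← hu, map_add, map_add, WW_ex, WW_ex]
            have := hG.wle s hst; omega
          have hb := rho_le (c + ex s.2)
          rw [hd2] at hb
          refine ih (100000 * u.degree - rho (c + ex s.2)) (by omega) _ (by rw [hd2])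
            (hn.trans hw) (by rw [hd2]; exact hd)
      exact key t fun s hs => hs

lemma Red_all (n d : ℕ) (f : PX) (h : ∀ u ∈ f.support, n ≤ WW u ∧ u.degree ≤ d) : Red n d f := by
  rw [f.as_sum]
  have key : ∀ s : Finset (Fin 30 →₀ ℕ), s ⊆ f.support →
      Red n d (∑ v ∈ s, monomial v (coeff v f)) := by
    classical
    intro s
    induction s using Finset.induction_on with
    | empty => intro _; simpa using Red.zero n d
    | insert a s ha ih =>
      intro hsub
      rw [Finset.sum_insert ha]
      refine Red.add ?_ (ih fun x hx => hsub (by simp [hx]))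
      have h1 := h a (hsub (by simp))
      have := (Red_monomial n d _ a le_rfl h1.1 h1.2).smul (coeff a f)
      rwa [smul_monomial, smul_eq_mul, mul_one] at this
  exact key _ subset_rfl


/-! ## Dimension count -/

noncomputable def stdU (L : List (List ℕ)) (d : ℕ) : Finset (Fin 30 →₀ ℕ) :=
  (Finset.range (d + 1)).biUnion (stdF L)

lemma mem_stdU (L : List (List ℕ)) (d : ℕ) (u : Fin 30 →₀ ℕ) :
    u ∈ stdU L d ↔ u.degree ≤ d ∧ Std L u := by
  simp only [stdU, Finset.mem_biUnion, Finset.mem_range, mem_stdF]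
  constructor
  · rintro ⟨a, ha, rfl, h⟩; exact ⟨by omega, h⟩
  · rintro ⟨h1, h2⟩; exact ⟨_, by omega, rfl, h2⟩

lemma stdU_card (d : ℕ) : (stdU (leadsOf tabG) d).card = (stdU (leadsOf tabQ) d).card := by
  have key : ∀ L, (stdU L d).card = ∑ n ∈ Finset.range (d + 1), (stdF L n).card := by
    intro L
    refine Finset.card_biUnion fun a _ b _ hab => ?_
    rw [Function.onFun, Finset.disjoint_left]
    intro u hu hv
    rw [mem_stdF] at hu hv
    exact hab (hu.1.symm.trans hv.1)
  rw [key, key]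
  exact Finset.sum_congr rfl fun n _ => cnt_eq n

noncomputable def fam (S : Finset (Fin 30 →₀ ℕ)) (u : S) : TX := phi5 (monomial u.val 1)

lemma phi5_fam (S : Finset (Fin 30 →₀ ℕ)) (f : PX) (h : f.support ⊆ S) :
    phi5 f = ∑ u : S, coeff u.val f • fam S u := by
  simp only [fam]
  rw [Finset.sum_coe_sort S (fun u => coeff u f • phi5 (monomial u 1))]
  rw [← Finset.sum_subset h]
  · conv_lhs => rw [f.as_sum, map_sum]
    refine Finset.sum_congr rfl fun v _ => ?_
    rw [← map_smul, smul_monomial, smul_eq_mul, mul_one]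
  · intro x _ hx
    rw [notMem_support_iff.1 hx, zero_smul]

lemma famQ_indep (d : ℕ) : LinearIndependent ℚ (fam (stdU (leadsOf tabQ) d)) := by
  classical
  rw [Fintype.linearIndependent_iff]
  intro g hg i
  set f : PX := ∑ u : stdU (leadsOf tabQ) d, monomial u.val (g u) with hf
  have hc : ∀ v, coeff v f = ∑ u : stdU (leadsOf tabQ) d, if u.val = v then g u else 0 := by
    intro v
    rw [hf, coeff_sum]
    exact Finset.sum_congr rfl fun u _ => coeff_monomial _ _ _
  have hsup : ∀ v ∈ f.support, Std (leadsOf tabQ) v := by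
    intro v hv
    rw [mem_support_iff, hc] at hv
    obtain ⟨u, -, hu⟩ := Finset.exists_ne_zero_of_sum_ne_zero hv
    have : u.val = v := by by_contra h; simp [h] at hu
    rw [← this]
    exact ((mem_stdU _ _ _).1 u.2).2
  have hz : phi5 f = 0 := by
    rw [← hg, hf, map_sum]
    refine Finset.sum_congr rfl fun u _ => ?_
    rw [fam, ← map_smul, smul_monomial, smul_eq_mul, mul_one]
  have h0 := Qstd_indep f hsup hz
  have := hc i.val
  rw [h0, coeff_zero, Finset.sum_eq_single i] at this
  · simpa using this.symm
  · intro b _ hb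
    rw [if_neg fun h => hb (Subtype.ext h)]
  · simp

lemma famG_indep (d : ℕ) : LinearIndependent ℚ (fam (stdU (leadsOf tabG) d)) := by
  rw [linearIndependent_iff_card_le_finrank_span]
  have h1 := linearIndependent_iff_card_le_finrank_span.1 (famQ_indep d)
  rw [Fintype.card_coe, stdU_card, ← Fintype.card_coe]
  refine h1.trans ?_
  unfold Set.finrank
  have : FiniteDimensional ℚ (Submodule.span ℚ (Set.range (fam (stdU (leadsOf tabG) d)))) :=
    FiniteDimensional.span_of_finite ℚ (Set.finite_range _)
  refine Submodule.finrank_mono ?_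
  rw [Submodule.span_le]
  rintro _ ⟨u, rfl⟩
  have hu := (mem_stdU _ _ _).1 u.2
  obtain ⟨r, hr, hphi, -⟩ := Red_monomial 0 d _ u.val le_rfl (Nat.zero_le _) hu.1
  rw [SetLike.mem_coe, fam, hphi, phi5_fam (stdU (leadsOf tabG) d) r]
  · exact Submodule.sum_mem _ fun i _ =>
      Submodule.smul_mem _ _ (Submodule.subset_span ⟨i, rfl⟩)
  · intro v hv
    exact (mem_stdU _ _ _).2 ⟨(hr v hv).2, (hr v hv).1⟩

lemma Gstd_indep (f : PX) (d : ℕ) (hf : ∀ u ∈ f.support, Std (leadsOf tabG) u ∧ u.degree ≤ d)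
    (h : phi5 f = 0) : f = 0 := by
  have hs : f.support ⊆ stdU (leadsOf tabG) d := fun u hu =>
    (mem_stdU _ _ _).2 ⟨(hf u hu).2, (hf u hu).1⟩
  rw [phi5_fam _ f hs] at h
  have := Fintype.linearIndependent_iff.1 (famG_indep d) _ h
  ext u
  rw [coeff_zero]
  by_contra hne
  have hu : u ∈ f.support := mem_support_iff.2 hne
  exact hne (this ⟨u, hs hu⟩)

lemma init_mem_Jb (f : PX) (hf : f ∈ I5) (hne : f ≠ 0) : initialForm wR f ∈ Jb := by
  have hs : f.support.Nonempty := by simpa using hne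
  obtain ⟨u, hu, hmin⟩ := Finset.exists_min_image f.support WW hs
  obtain ⟨v, hv, hmax⟩ := Finset.exists_max_image f.support Finsupp.degree hs
  rw [initialForm_eq f (WW u) hmin ⟨u, hu, rfl⟩]
  obtain ⟨r, h1, h2, h3⟩ := Red_all (WW u) v.degree f fun x hx => ⟨hmin x hx, hmax x hx⟩
  have hf0 : phi5 f = 0 := hf
  have hr := Gstd_indep r _ h1 (h2.symm.trans hf0)
  rwa [hr, map_zero, sub_zero] at h3

lemma initialIdeal_eq : initialIdeal wR I5 = Jb := by
  apply le_antisymm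
  · rw [initialIdeal, Ideal.span_le]
    rintro _ ⟨f, hf, hne, rfl⟩
    exact init_mem_Jb f hf hne
  · rw [Jb, Ideal.span_le]
    rintro b ⟨hb, -⟩
    exact hb

lemma binomial_part : IsBinomialIdeal (initialIdeal wR I5) :=
  ⟨_, initialIdeal_eq, fun _ hf => hf.2⟩


/-! ## Non-primality -/

def r0 (p : Fin 4 × Fin 5) : ℕ := if p.1 = 0 then 1 else 0

def rlx (m : List ℕ) : ℕ := (m.map fun k => r0 (pt k)).sum

lemma r0_exx (m : List ℕ) : Finsupp.weight r0 (exx m) = rlx m := by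
  induction m with
  | nil => simp [exx, rlx]
  | cons a m ih =>
    have h1 : exx (a :: m) = Finsupp.single (pt a) 1 + exx m := by simp [exx]
    have h2 : rlx (a :: m) = r0 (pt a) + rlx m := by simp [rlx]
    rw [h1, h2, map_add, ih, Finsupp.weight_single, one_smul]

lemma hom_pev (p : LPoly) (h : ∀ s ∈ p, rlx s.2 = 1) : IsWeightedHomogeneous r0 (pev vx p) 1 := by
  induction p with
  | nil => simpa using isWeightedHomogeneous_zero ℚ r0 1
  | cons s p ih =>
    rw [pev_cons, mev_vx]
    refine IsWeightedHomogeneous.add ?_ (ih fun s hs => h s (by simp [hs]))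
    have : ((s.1 : ℤ) : TX) * monomial (exx s.2) 1 = monomial (exx s.2) (s.1 : ℚ) := by
      rw [← map_intCast (C : ℚ →+* TX), C_mul_monomial, mul_one]
    rw [this]
    exact isWeightedHomogeneous_monomial r0 _ _ (by rw [r0_exx]; exact h s (by simp))

set_option maxRecDepth 100000 in
lemma checkHom : ∀ i : Fin 30, ∀ s ∈ minT i.val, rlx s.2 = 1 := by decide +kernel

lemma hom_phi (u : Fin 30 →₀ ℕ) :
    IsWeightedHomogeneous r0 (phi5 (monomial u 1)) u.degree := by
  rw [phi5, aeval_monomial, map_one, one_mul, Finsupp.prod_fintype _ _ (by simp),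
    Finsupp.degree_eq_sum]
  refine IsWeightedHomogeneous.prod _ _ _ fun i _ => ?_
  have h := v30_eq i.val
  rw [v30, dif_pos i.2, phi5, aeval_X] at h
  rw [Fin.eta] at h
  rw [h]
  simpa using (hom_pev _ (checkHom i)).pow (u i)

lemma phi_hom (n : ℕ) (f : PX) :
    phi5 (homogeneousComponent n f) = weightedHomogeneousComponent r0 n (phi5 f) := by
  classical
  conv_rhs => rw [f.as_sum, map_sum, map_sum]
  rw [homogeneousComponent_apply, map_sum, Finset.sum_filter]
  refine Finset.sum_congr rfl fun u _ => ?_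
  have : monomial u (coeff u f) = coeff u f • monomial u (1 : ℚ) := by
    rw [smul_monomial, smul_eq_mul, mul_one]
  rw [this, map_smul, map_smul]
  split
  · next h => subst h; rw [(hom_phi u).weightedHomogeneousComponent_same]
  · next h => rw [(hom_phi u).weightedHomogeneousComponent_ne n (Ne.symm h), smul_zero]

set_option maxRecDepth 100000 in
lemma checkLen : ∀ l ∈ leadsOf tabQ, l.length = 2 ∧ ∀ a ∈ l, a < 30 := by decide +kernel

lemma deg_ge_two (f : PX) (hf : phi5 f = 0) (u : Fin 30 →₀ ℕ) (hu : u ∈ f.support) :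
    2 ≤ u.degree := by
  by_contra hlt
  have h0 : homogeneousComponent u.degree f = 0 := by
    refine Qstd_indep _ ?_ (by rw [phi_hom, hf, map_zero])
    intro v hv l hl hd
    have hv1 : v.degree = u.degree := by
      by_contra hne
      rw [mem_support_iff, coeff_homogeneousComponent, if_neg hne] at hv
      exact hv rfl
    have h2 := checkLen l hl
    have h3 := degree_ex l h2.2
    have h4 : (ex l).degree ≤ v.degree := Finsupp.degree_mono (show ex l ≤ v from fun i => hd i)
    omega
  have h1 := coeff_homogeneousComponent u.degree f u
  rw [h0, if_pos rfl, coeff_zero] at h1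
  exact mem_support_iff.1 hu h1.symm

lemma initialForm_support (f : PX) : (initialForm wR f).support ⊆ f.support := by
  classical
  intro u hu
  rw [initialForm] at hu
  obtain ⟨v, hv, h⟩ := Finset.mem_biUnion.1 (support_sum hu)
  split at h
  · have := support_monomial_subset h
    rw [Finset.mem_singleton] at this
    rwa [this]
  · simp at h

lemma initialIdeal_le : initialIdeal wR I5 ≤ idealOfVars (Fin 30) ℚ ^ 2 := by
  rw [initialIdeal, Ideal.span_le]
  rintro _ ⟨f, hf, -, rfl⟩
  rw [SetLike.mem_coe, mem_pow_idealOfVars_iff]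
  intro u hu
  exact deg_ge_two f hf u (initialForm_support f hu)

lemma X_notMem (i : Fin 30) : (X i : PX) ∉ initialIdeal wR I5 := by
  intro h
  have := initialIdeal_le h
  rw [X, monomial_mem_pow_idealOfVars_iff _ _ one_ne_zero, Finsupp.degree_single] at this
  omega

set_option maxRecDepth 100000 in
lemma checkHead : tabG.headD [] ∈ tabG ∧ ((tabG.headD []).filter fun s =>
    decide (wN s.2 = wN ((tabG.headD []).headD (0, [])).2)) = [(1, [4, 12])] := by
  decide +kernel

lemma XX_mem : (X 4 * X 12 : PX) ∈ initialIdeal wR I5 := by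
  obtain ⟨h1, h2⟩ := checkHead
  obtain ⟨l, t, hg, hG⟩ := tabG_elt _ h1
  have h3 := hG.init
  rw [hg] at h2
  simp only [List.headD_cons] at h2
  have h4 : pev vX [(1, [4, 12])] = (X 4 * X 12 : PX) := by simp [vX]
  rw [← h4]
  convert h3 using 1
  exact (congrArg (pev vX) h2).symm

lemma not_prime_part : ¬ (initialIdeal wR I5).IsPrime := by
  intro h
  rcases h.mem_or_mem XX_mem with h | h
  · exact X_notMem _ h
  · exact X_notMem _ h

/-- For the weight vector associated to the string cone of the reduced expression
`s₁s₂s₁s₃s₄s₃s₂s₃s₁s₂` for `Flag₅`, the initial ideal `init_w(I₅)` is generated by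
binomials but is not prime. -/
theorem string3_flag5_initial_ideal_binomial_not_prime :
    IsBinomialIdeal (initialIdeal ![0, 512, 384, 74, 0, 256, 72, 768, 584, 456, 0, 64, 320,
        832, 58, 56, 568, 440, 111, 48, 304, 108, 816, 620, 492, 0, 32, 96, 352, 864] I5) ∧
    ¬ (initialIdeal ![0, 512, 384, 74, 0, 256, 72, 768, 584, 456, 0, 64, 320, 832, 58, 56,
        568, 440, 111, 48, 304, 108, 816, 620, 492, 0, 32, 96, 352, 864] I5).IsPrime := by
  exact ⟨binomial_part, not_prime_part⟩
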